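/- Let k be an algebraically closed field of characteristic 0 and let F ∈ k[x_0,x_1,x_2,x_3] be an irreducible homogeneous polynomial of degree d ≥ 4 defining the integral surface X = {F = 0} ⊂ P^3, and suppose that only finitely many 2-dimensional k-linear subspaces of k^4 are contained in {x ∈ k^4 : F(x) = 0} (only finitely many lines lie on X). Then there exists a nonzero P ∈ k^4 with F(P) = 0 such that: (1) some partial derivative ∂F/∂x_i does not vanish at P; (2) P lies in no 3-dimensional k-linear subspace of k^4 on which F vanishes identically, and for every 3-dimensional k-linear subspace Π of k^4 containing P, the order of vanishing at P of the restriction of F to Π is at most 2; (3) P lies in no 2-dimensional k-linear subspace of k^4 on which F vanishes identically; (4) for every 3-dimensional k-linear subspace Π of k^4 containing P and every cubic form c on Π dividing the restriction of F to Π with c(P) = 0, the point P is a non-singular point of the plane cubic {c = 0}, i.e. the gradient of c does not vanish at P. -/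

import Mathlib

open MvPolynomial

/-- The composite `G ∘ ψ` of a polynomial `G` in `m` variables with a linear map
`ψ : k^n → k^m`, as a polynomial in `n` variables. -/
noncomputable def restrictPoly {k : Type*} [CommSemiring k] {m n : ℕ}
    (G : MvPolynomial (Fin m) k) (ψ : (Fin n → k) →ₗ[k] (Fin m → k)) :
    MvPolynomial (Fin n) k :=
  aeval (fun i => ∑ j, C (ψ (Pi.single j 1) i) * X j) G


set_option linter.all false
set_option linter.unusedSimpArgs false

namespace S18

section basics
variable {k K σ : Type*} [CommRing k] [CommRing K] [Algebra k K]

lemma chain_rule [Fintype σ] {S : Type*} [CommRing S] [Algebra k S] (D : Derivation k S S)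
    (Y : σ → S) (F : MvPolynomial σ k) :
    D (aeval Y F) = ∑ i, aeval Y (pderiv i F) * D (Y i) := by
  classical
  induction F using MvPolynomial.induction_on with
  | C a => simp
  | add p q hp hq => simp [hp, hq, add_mul, Finset.sum_add_distrib]
  | mul_X p i hp =>
    simp only [map_mul, aeval_X, Derivation.leibniz, hp, smul_eq_mul, map_add, pderiv_X, add_mul,
      Finset.sum_add_distrib, Finset.mul_sum]
    congr 1
    · rw [Finset.sum_eq_single i]
      · simp [mul_assoc]
      · intro j _ hj; simp [Pi.single_apply, hj.symm]
      · simp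
    · refine Finset.sum_congr rfl fun j _ => by ring

/-- derivation acting on coefficients -/
noncomputable def cD (D : Derivation k K K) :
    Derivation k (MvPolynomial σ K) (MvPolynomial σ K) :=
  let f : MvPolynomial σ K → MvPolynomial σ K := fun p => ∑ m ∈ p.support, monomial m (D (coeff m p))
  have hf : ∀ p m, coeff m (f p) = D (coeff m p) := by
    classical
    intro p m
    simp only [f, coeff_sum, coeff_monomial]
    rw [Finset.sum_ite_eq' p.support m]
    split_ifs with h
    · rfl
    · rw [notMem_support_iff.mp h, map_zero]
  Derivation.mk'
    { toFun := f
      map_add' := fun p q => by ext m; simp [hf]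
      map_smul' := fun r p => by ext m; simp [hf] }
    (fun p q => by
      classical
      ext m
      simp only [LinearMap.coe_mk, AddHom.coe_mk, hf, coeff_mul, coeff_add, smul_eq_mul, map_sum,
        Derivation.leibniz, Finset.sum_add_distrib]
      congr 1
      exact Finsupp.sum_antidiagonal_swap m (fun x y => coeff y q * D (coeff x p)))

lemma coeff_cD (D : Derivation k K K) (p : MvPolynomial σ K) (m) :
    coeff m (cD D p) = D (coeff m p) := by
  classical
  show coeff m (∑ m ∈ p.support, monomial m (D (coeff m p))) = _
  simp only [coeff_sum, coeff_monomial]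
  rw [Finset.sum_ite_eq' p.support m]
  split_ifs with h
  · rfl
  · rw [notMem_support_iff.mp h, map_zero]

@[simp] lemma cD_C (D : Derivation k K K) (a : K) :
    cD D (C a : MvPolynomial σ K) = C (D a) := by
  classical
  ext m; rw [coeff_cD, coeff_C, coeff_C]; split_ifs <;> simp

@[simp] lemma cD_X (D : Derivation k K K) (i : σ) :
    cD D (X i : MvPolynomial σ K) = 0 := by
  classical
  ext m; rw [coeff_cD, coeff_X]; split_ifs <;> simp

lemma cD_pderiv (D : Derivation k K K) (i : σ) (p : MvPolynomial σ K) :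
    cD D (pderiv i p) = pderiv i (cD D p) := by
  classical
  induction p using MvPolynomial.induction_on with
  | C a => simp
  | add p q hp hq => simp [hp, hq]
  | mul_X p j hp =>
    simp only [Derivation.leibniz, smul_eq_mul, map_add, hp, cD_X, mul_zero, pderiv_X]
    by_cases h : i = j
    · subst h; simp [add_comm]
    · simp [Pi.single_apply, h, Ne.symm h]

lemma pderiv_comm (i j : σ) (p : MvPolynomial σ K) :
    pderiv i (pderiv j p) = pderiv j (pderiv i p) := by
  classical
  induction p using MvPolynomial.induction_on with
  | C a => simp
  | add p q hp hq => simp [hp, hq]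
  | mul_X p l hp =>
    simp only [Derivation.leibniz, smul_eq_mul, map_add, hp, pderiv_X]
    by_cases h : i = l <;> by_cases h' : j = l <;> simp [Pi.single_apply, h, h'] <;> ring

lemma cD_comm (D E : Derivation k K K) (h : ∀ a, D (E a) = E (D a)) (p : MvPolynomial σ K) :
    cD D (cD E p) = cD E (cD D p) := by
  ext m; simp [coeff_cD, h]

lemma cD_totalDegree (D : Derivation k K K) (p : MvPolynomial σ K) :
    (cD D p).totalDegree ≤ p.totalDegree := by
  apply Finset.sup_mono
  intro m hm
  rw [mem_support_iff, coeff_cD] at hm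
  rw [mem_support_iff]
  intro h; rw [h, map_zero] at hm; exact hm rfl

lemma pderiv_totalDegree (i : σ) (p : MvPolynomial σ K) :
    (pderiv i p).totalDegree ≤ p.totalDegree := by
  classical
  apply Finset.sup_le
  intro m hm
  rw [mem_support_iff, coeff_pderiv] at hm
  have : m + Finsupp.single i 1 ∈ p.support := by
    rw [mem_support_iff]; intro h; simp [h] at hm
  refine le_trans ?_ (le_totalDegree this)
  rw [Finsupp.sum_add_index' (by simp) (by simp)]
  simp
end basics
end S18


namespace S18

section core
variable {k K : Type*} [Field k] [Field K] [Algebra k K]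

/-- the operator `D - ∂_i` -/
noncomputable def nab (D : Derivation k K K) (i : Fin 2) :
    Derivation k (MvPolynomial (Fin 2) K) (MvPolynomial (Fin 2) K) :=
  cD D - (pderiv i).restrictScalars k

lemma nab_apply (D : Derivation k K K) (i : Fin 2) (p) : nab D i p = cD D p - pderiv i p := rfl

lemma cc_cD (D : Derivation k K K) (p : MvPolynomial (Fin 2) K) :
    constantCoeff (cD D p) = D (constantCoeff p) := by
  simp only [constantCoeff_eq, coeff_cD]

lemma nab_C (D : Derivation k K K) (i : Fin 2) (a : K) : nab D i (C a) = C (D a) := by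
  simp [nab_apply]

lemma cc_nab (D : Derivation k K K) (i : Fin 2) (p : MvPolynomial (Fin 2) K) :
    constantCoeff (nab D i p) = D (constantCoeff p) - constantCoeff (pderiv i p) := by
  simp only [nab_apply, map_sub, cc_cD]

lemma pderiv_nab (D : Derivation k K K) (i j : Fin 2) (p : MvPolynomial (Fin 2) K) :
    pderiv j (nab D i p) = nab D i (pderiv j p) := by
  simp only [nab_apply, map_sub, cD_pderiv, pderiv_comm]

lemma nab_comm (D E : Derivation k K K) (hDE : ∀ a, D (E a) = E (D a)) (i j : Fin 2)
    (p : MvPolynomial (Fin 2) K) :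
    nab D i (nab E j p) = nab E j (nab D i p) := by
  simp only [nab_apply, map_sub, cD_pderiv, cD_comm D E hDE, pderiv_comm i j]
  ring

lemma nab_totalDegree (D : Derivation k K K) (i : Fin 2) (p : MvPolynomial (Fin 2) K) :
    (nab D i p).totalDegree ≤ p.totalDegree :=
  (totalDegree_sub _ _).trans (max_le (cD_totalDegree _ _) (pderiv_totalDegree _ _))

/-- linear form -/
noncomputable def lf (r s : K) : MvPolynomial (Fin 2) K := C r * X 0 + C s * X 1

lemma cc_lf (r s : K) : constantCoeff (lf r s) = 0 := by simp [lf]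
lemma pd0_lf (r s : K) : pderiv 0 (lf r s) = C r := by
  simp [lf, pderiv_X]
lemma pd1_lf (r s : K) : pderiv 1 (lf r s) = C s := by
  simp [lf, pderiv_X]
lemma nab0_lf (D : Derivation k K K) (r s : K) : nab D 0 (lf r s) = lf (D r) (D s) - C r := by
  rw [nab_apply, pd0_lf]; simp [lf, mul_comm]
lemma nab1_lf (D : Derivation k K K) (r s : K) : nab D 1 (lf r s) = lf (D r) (D s) - C s := by
  rw [nab_apply, pd1_lf]; simp [lf, mul_comm]

lemma lf_totalDegree_le (r s : K) : (lf r s).totalDegree ≤ 1 := by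
  refine (totalDegree_add _ _).trans (max_le ?_ ?_)
  · refine (totalDegree_mul _ _).trans (by simp)
  · refine (totalDegree_mul _ _).trans (by simp)

lemma lf_ne_zero {r s : K} (h : r ≠ 0 ∨ s ≠ 0) : lf r s ≠ 0 := by
  intro h0
  have h1 := pd0_lf r s
  have h2 := pd1_lf r s
  rw [h0, map_zero] at h1 h2
  rcases h with h | h
  · exact h (C_injective _ _ (by rw [← h1, map_zero]))
  · exact h (C_injective _ _ (by rw [← h2, map_zero]))

lemma const_of_totalDegree {p : MvPolynomial (Fin 2) K} (h : p.totalDegree ≤ 0) :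
    p = C (constantCoeff p) := by
  rw [constantCoeff_eq]
  exact totalDegree_eq_zero_iff_eq_C.mp (Nat.le_zero.mp h)

lemma lf_totalDegree {r s : K} (h : r ≠ 0 ∨ s ≠ 0) : (lf r s).totalDegree = 1 := by
  refine le_antisymm (lf_totalDegree_le r s) ?_
  by_contra h0
  have := const_of_totalDegree (p := lf r s) (by omega)
  rw [cc_lf, map_zero] at this
  exact lf_ne_zero h this

lemma isUnit_of_totalDegree {p : MvPolynomial (Fin 2) K} (h : p.totalDegree ≤ 0) (h0 : p ≠ 0) :
    IsUnit p := by
  rw [const_of_totalDegree h] at h0 ⊢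
  exact (isUnit_iff_ne_zero.mpr (by rintro h1; rw [h1] at h0; simp at h0)).map C

lemma linear_of_totalDegree {p : MvPolynomial (Fin 2) K} (h : p.totalDegree ≤ 1)
    (h0 : constantCoeff p = 0) : ∃ l m, p = lf l m := by
  classical
  refine ⟨coeff (Finsupp.single 0 1) p, coeff (Finsupp.single 1 1) p, ?_⟩
  ext m
  simp only [lf, coeff_add, coeff_C_mul, coeff_X]
  by_cases hm : m.degree ≤ 1
  · rcases Nat.le_one_iff_eq_zero_or_eq_one.mp hm with h1 | h1
    · rw [Finsupp.degree_eq_zero_iff] at h1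
      subst h1
      rw [← constantCoeff_eq, h0]
      simp
    · obtain ⟨i, rfl⟩ : ∃ i, m = Finsupp.single i 1 := by
        have : m 0 + m 1 = 1 := by
          rw [Finsupp.degree_eq_sum, Fin.sum_univ_two] at h1; exact h1
        rcases (by omega : (m 0 = 1 ∧ m 1 = 0) ∨ (m 0 = 0 ∧ m 1 = 1)) with h2 | h2
        · exact ⟨0, by ext i; fin_cases i <;> simp [h2]⟩
        · exact ⟨1, by ext i; fin_cases i <;> simp [h2]⟩
      fin_cases i <;> simp [Finsupp.single_left_inj]
  · have h1 : coeff m p = 0 := by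
      by_contra h2
      have := le_totalDegree (mem_support_iff.mpr h2)
      rw [Finsupp.degree] at hm
      exact hm (this.trans h)
    rw [h1]
    rw [if_neg, if_neg]
    · simp
    · rintro rfl; simp at hm
    · rintro rfl; simp at hm

lemma lf_isRelPrime {r s t : K} (hdet : r * t - s ^ 2 ≠ 0) : IsRelPrime (lf r s) (lf s t) := by
  intro e he1 he2
  have hX0 : e ∣ X 0 := by
    have : (X 0 : MvPolynomial (Fin 2) K) = C (r*t-s^2)⁻¹ * (C t * lf r s - C s * lf s t) := by
      have h1 : C t * lf r s - C s * lf s t = C (r*t-s^2) * X 0 := by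
        simp only [lf, map_sub, map_mul, map_pow]; ring
      rw [h1, ← mul_assoc, ← C_mul, inv_mul_cancel₀ hdet]; simp
    rw [this]
    exact (dvd_sub (he1.mul_left _) (he2.mul_left _)).mul_left _
  have hX1 : e ∣ X 1 := by
    have : (X 1 : MvPolynomial (Fin 2) K) = C (r*t-s^2)⁻¹ * (C r * lf s t - C s * lf r s) := by
      have h1 : C r * lf s t - C s * lf r s = C (r*t-s^2) * X 1 := by
        simp only [lf, map_sub, map_mul, map_pow]; ring
      rw [h1, ← mul_assoc, ← C_mul, inv_mul_cancel₀ hdet]; simp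
    rw [this]
    exact (dvd_sub (he2.mul_left _) (he1.mul_left _)).mul_left _
  have : Irreducible (X 0 : MvPolynomial (Fin 2) K) := (X_prime (i := (0 : Fin 2))).irreducible
  obtain ⟨f, hf⟩ := hX0
  rcases this.isUnit_or_isUnit hf with h | h
  · exact h
  · exfalso
    have : (X 0 : MvPolynomial (Fin 2) K) ∣ X 1 := by
      obtain ⟨g, hg⟩ := h.exists_right_inv
      have : e = X 0 * g := by rw [hf, mul_assoc, hg, mul_one]
      exact (Dvd.intro _ this.symm).trans hX1
    rw [X_dvd_X] at this
    simp at this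

lemma lin_div {r s t : K} (hdet : r * t - s ^ 2 ≠ 0) {x y : MvPolynomial (Fin 2) K}
    (h : x * lf s t = y * lf r s) :
    ∃ B, x = B * lf r s ∧ y = B * lf s t ∧ ∀ n, x.totalDegree ≤ n + 1 → B.totalDegree ≤ n := by
  have h0 : r ≠ 0 ∨ s ≠ 0 := by
    by_contra h0; push Not at h0; simp [h0.1, h0.2] at hdet
  have h1 : lf r s ∣ x * lf s t := h ▸ Dvd.intro_left _ rfl
  obtain ⟨B, hB⟩ := (lf_isRelPrime hdet).dvd_of_dvd_mul_right h1
  refine ⟨B, by rw [hB]; ring, ?_, ?_⟩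
  · have := lf_ne_zero h0
    apply mul_right_cancel₀ this
    rw [← h, hB]; ring
  · intro n hn
    by_cases hb : B = 0
    · simp [hb]
    rw [hB, totalDegree_mul_of_isDomain (lf_ne_zero h0) hb, lf_totalDegree h0] at hn
    omega

end core
end S18


namespace S18

section core
variable {k K : Type*} [Field k] [Field K] [Algebra k K]

lemma jet1 (i : Fin 2) (x y : MvPolynomial (Fin 2) K) :
    constantCoeff (pderiv i (x * y)) =
      constantCoeff (pderiv i x) * constantCoeff y + constantCoeff x * constantCoeff (pderiv i y) := by
  simp only [Derivation.leibniz, smul_eq_mul, map_add, map_mul]; ring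

lemma jet2 (i j : Fin 2) (x y : MvPolynomial (Fin 2) K) :
    constantCoeff (pderiv i (pderiv j (x * y))) =
      constantCoeff (pderiv i (pderiv j x)) * constantCoeff y
      + constantCoeff (pderiv i x) * constantCoeff (pderiv j y)
      + constantCoeff (pderiv j x) * constantCoeff (pderiv i y)
      + constantCoeff x * constantCoeff (pderiv i (pderiv j y)) := by
  simp only [Derivation.leibniz, smul_eq_mul, map_add, map_mul]; ring

/-- Twisted operator. -/
noncomputable def Tw (D : Derivation k K K) (i : Fin 2) (κ : K) (p : MvPolynomial (Fin 2) K) :=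
  nab D i p - C κ * p

lemma Tw_totalDegree (D : Derivation k K K) (i : Fin 2) (κ : K) (p : MvPolynomial (Fin 2) K) :
    (Tw D i κ p).totalDegree ≤ p.totalDegree :=
  (totalDegree_sub _ _).trans (max_le (nab_totalDegree _ _ _)
    ((totalDegree_mul _ _).trans (by simp)))

lemma Tw_mul (D : Derivation k K K) (i : Fin 2) (κ : K) (p q : MvPolynomial (Fin 2) K) :
    Tw D i κ (p * q) = Tw D i κ p * q + p * nab D i q := by
  simp only [Tw, Derivation.leibniz, smul_eq_mul]; ring

lemma Tw_comm (D E : Derivation k K K) (hDE : ∀ a, D (E a) = E (D a)) (κ l : K)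
    (p : MvPolynomial (Fin 2) K) :
    Tw D 0 κ (Tw E 1 l p) - Tw E 1 l (Tw D 0 κ p) = - C (D l - E κ) * p := by
  simp only [Tw, Derivation.leibniz, smul_eq_mul, map_sub, nab_comm D E hDE, nab_C]
  ring

lemma nab_lf_comm (D E : Derivation k K K) (r s t : K) (h1 : D s = E r) (h2 : D t = E s) :
    nab D 0 (lf s t) = nab E 1 (lf r s) := by
  rw [nab0_lf, nab1_lf, h1, h2]

lemma tower_step (D E : Derivation k K K) (hDE : ∀ a, D (E a) = E (D a))
    {r s t κ l : K} (hdet : r * t - s ^ 2 ≠ 0) (h1 : D s = E r) (h2 : D t = E s)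
    (hω : D l = E κ) {x y : MvPolynomial (Fin 2) K}
    (hx0 : Tw D 0 κ x = y * lf r s) (hx1 : Tw E 1 l x = y * lf s t) :
    ∃ z, Tw D 0 κ y = z * lf r s ∧ Tw E 1 l y = z * lf s t ∧
      ∀ n, y.totalDegree ≤ n + 1 → z.totalDegree ≤ n := by
  have h := Tw_comm D E hDE κ l x
  rw [hx0, hx1, Tw_mul, Tw_mul, nab_lf_comm D E r s t h1 h2, hω, sub_self, map_zero, neg_zero,
    zero_mul] at h
  obtain ⟨z, hz, hz', hz''⟩ := lin_div (x := Tw D 0 κ y) (y := Tw E 1 l y) hdet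
    (by linear_combination h)
  exact ⟨z, hz, hz', fun n hn => hz'' n ((Tw_totalDegree _ _ _ _).trans hn)⟩

theorem core [CharZero K] (D E : Derivation k K K) (hDE : ∀ a, D (E a) = E (D a))
    {r s t : K} (hdet : r * t - s ^ 2 ≠ 0) (hi1 : D s = E r) (hi2 : D t = E s)
    {p h c g : MvPolynomial (Fin 2) K} (hp0 : nab D 0 p = h * lf r s) (hp1 : nab E 1 p = h * lf s t)
    (hh : constantCoeff h ≠ 0)
    (hQ : ∀ q, q ∣ p → q.totalDegree ≤ 2 → constantCoeff q = 0 →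
      (∀ j, constantCoeff (pderiv j q) = 0) → False)
    (hcg : c * g = p) (hcd : c.totalDegree ≤ 3) (hc0 : constantCoeff c = 0)
    (hc1 : ∀ j, constantCoeff (pderiv j c) = 0) :
    ∃ (c B B' B'' : MvPolynomial (Fin 2) K) (κ l : K), c ≠ 0 ∧ constantCoeff c = 0 ∧
      c.totalDegree ≤ 3 ∧ B.totalDegree ≤ 2 ∧ B'.totalDegree ≤ 1 ∧ B''.totalDegree ≤ 0 ∧
      Tw D 0 κ c = B * lf r s ∧ Tw E 1 l c = B * lf s t ∧
      Tw D 0 κ B = B' * lf r s ∧ Tw E 1 l B = B' * lf s t ∧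
      Tw D 0 κ B' = B'' * lf r s ∧ Tw E 1 l B' = B'' * lf s t ∧
      Tw D 0 κ B'' = 0 ∧ Tw E 1 l B'' = 0 := by
  -- second jets
  have key : ∀ c g : MvPolynomial (Fin 2) K, c * g = p → constantCoeff c = 0 →
      (∀ j, constantCoeff (pderiv j c) = 0) →
      constantCoeff (pderiv 0 (pderiv 0 c)) * constantCoeff g = - (constantCoeff h * r) ∧
      constantCoeff (pderiv 0 (pderiv 1 c)) * constantCoeff g = - (constantCoeff h * s) ∧
      constantCoeff (pderiv 1 (pderiv 1 c)) * constantCoeff g = - (constantCoeff h * t) := by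
    intro c g hcg hc0 hc1
    have e1 := congrArg (fun x => constantCoeff (pderiv 0 x)) hp0
    have e2 := congrArg (fun x => constantCoeff (pderiv 1 x)) hp0
    have e3 := congrArg (fun x => constantCoeff (pderiv 1 x)) hp1
    simp only [pderiv_nab, cc_nab, ← hcg, jet1, jet2, hc0, hc1, cc_lf, pd0_lf, pd1_lf,
      constantCoeff_C] at e1 e2 e3
    simp only [zero_mul, mul_zero, add_zero, zero_add, map_zero, zero_sub] at e1 e2 e3
    exact ⟨by linear_combination -e1, by linear_combination -e2, by linear_combination -e3⟩
  -- rescale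
  obtain ⟨k1, k2, k3⟩ := key c g hcg hc0 hc1
  have hg0 : constantCoeff g ≠ 0 := by
    intro hg; rw [hg, mul_zero] at k1 k2 k3
    apply hdet
    have : (constantCoeff h)^2 * (r * t - s^2) = 0 := by
      linear_combination (constantCoeff h * t) * k1 - (constantCoeff h * s) * k2
    rcases mul_eq_zero.mp this with h' | h'
    · exact absurd (pow_eq_zero_iff (two_ne_zero) |>.mp h') hh
    · exact h'
  obtain ⟨c, g, hcg, hcd, hc0, hc1, hg0, H00, H01, H11⟩ : ∃ c g : MvPolynomial (Fin 2) K,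
      c * g = p ∧ c.totalDegree ≤ 3 ∧ constantCoeff c = 0 ∧
      (∀ j, constantCoeff (pderiv j c) = 0) ∧ constantCoeff g ≠ 0 ∧
      constantCoeff (pderiv 0 (pderiv 0 c)) = r ∧ constantCoeff (pderiv 0 (pderiv 1 c)) = s ∧
      constantCoeff (pderiv 1 (pderiv 1 c)) = t := by
    refine ⟨C (-(constantCoeff g / constantCoeff h)) * c,
      C (-(constantCoeff h / constantCoeff g)) * g, ?_, ?_, ?_, ?_, ?_, ?_, ?_, ?_⟩
    · have : C (-(constantCoeff g / constantCoeff h)) * c *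
        (C (-(constantCoeff h / constantCoeff g)) * g) =
        C ((-(constantCoeff g / constantCoeff h)) * (-(constantCoeff h / constantCoeff g))) *
          (c * g) := by rw [C_mul]; ring
      rw [this, hcg]
      have : (-(constantCoeff g / constantCoeff h)) * (-(constantCoeff h / constantCoeff g)) = 1 := by
        field_simp
      rw [this]; simp
    · exact (totalDegree_mul _ _).trans (by simpa using hcd)
    · simp [hc0]
    · intro j; simp [jet1, hc0, hc1]
    · simp [hg0, hh]
    all_goals
      simp only [jet2, hc0, hc1, pderiv_C, map_zero, zero_mul, mul_zero, add_zero, zero_add,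
        constantCoeff_C]
      field_simp
    · linear_combination -k1
    · linear_combination -k2
    · linear_combination -k3
  have H10 : constantCoeff (pderiv 1 (pderiv 0 c)) = s := by rw [pderiv_comm]; exact H01
  have hcdvd : c ∣ p := ⟨g, hcg.symm⟩
  have hcne : c ≠ 0 := by
    rintro rfl
    simp only [map_zero] at H00 H01 H11
    apply hdet; rw [← H00, ← H01]; simp
  have hcd3 : c.totalDegree = 3 := by
    refine le_antisymm hcd ?_
    by_contra hlt
    exact hQ c hcdvd (by omega) hc0 hc1
  -- relatively prime
  have hrel : IsRelPrime c g := by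
    rintro e ⟨c', hc'⟩ ⟨g', hg'⟩
    have he0 : constantCoeff e ≠ 0 := by
      intro he; rw [hg', map_mul, he, zero_mul] at hg0; exact hg0 rfl
    have hc'0 : constantCoeff c' = 0 := by
      rw [hc', map_mul] at hc0; exact (mul_eq_zero.mp hc0).resolve_left he0
    have hc'1 : ∀ j, constantCoeff (pderiv j c') = 0 := by
      intro j
      have := hc1 j
      rw [hc', jet1, hc'0, mul_zero, zero_add] at this
      exact (mul_eq_zero.mp this).resolve_left he0
    have hene : e ≠ 0 := by rintro rfl; simp at he0
    have hc'ne : c' ≠ 0 := by rintro rfl; simp at hc'; exact hcne hc'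
    have hdeg := hcd3
    rw [hc', totalDegree_mul_of_isDomain hene hc'ne] at hdeg
    apply isUnit_of_totalDegree _ hene
    by_contra hlt
    exact hQ c' ((Dvd.intro_left e hc'.symm).trans hcdvd) (by omega) hc'0 hc'1
  have hM : ∃ lam, lf s t * nab D 0 c - lf r s * nab E 1 c = c * lam := by
    have : c ∣ g * (lf s t * nab D 0 c - lf r s * nab E 1 c) := by
      refine ⟨lf r s * nab E 1 g - lf s t * nab D 0 g, ?_⟩
      rw [← hcg] at hp0 hp1
      simp only [Derivation.leibniz, smul_eq_mul] at hp0 hp1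
      linear_combination lf s t * hp0 - lf r s * hp1
    exact hrel.dvd_of_dvd_mul_left this
  obtain ⟨lam, hlam⟩ := hM
  have hlamd : lam.totalDegree ≤ 1 := by
    by_cases hl : lam = 0
    · simp [hl]
    have h1 : (lf s t * nab D 0 c - lf r s * nab E 1 c).totalDegree ≤ 4 := by
      refine (totalDegree_sub _ _).trans (max_le ?_ ?_)
      · have := totalDegree_mul (lf s t) (nab D 0 c)
        have := lf_totalDegree_le s t
        have := nab_totalDegree D 0 c
        omega
      · have := totalDegree_mul (lf r s) (nab E 1 c)
        have := lf_totalDegree_le r s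
        have := nab_totalDegree E 1 c
        omega
    rw [hlam, totalDegree_mul_of_isDomain hcne hl] at h1
    omega
  have hlam0 : constantCoeff lam = 0 := by
    have e1 := congrArg (fun x => constantCoeff (pderiv 0 (pderiv 0 x))) hlam
    have e2 := congrArg (fun x => constantCoeff (pderiv 0 (pderiv 1 x))) hlam
    have e3 := congrArg (fun x => constantCoeff (pderiv 1 (pderiv 1 x))) hlam
    simp only [map_sub, jet2, pderiv_nab, cc_nab, hc0, hc1, cc_lf, pd0_lf, pd1_lf, constantCoeff_C,
      H00, H01, H10, H11, pderiv_C, map_zero] at e1 e2 e3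
    by_contra hne
    have hr : r = 0 := by
      apply (mul_eq_zero.mp (show r * constantCoeff lam = 0 by linear_combination -e1)).resolve_right hne
    have hs : s = 0 := by
      apply (mul_eq_zero.mp (show s * constantCoeff lam = 0 by linear_combination -e2)).resolve_right hne
    apply hdet; rw [hr, hs]; ring
  obtain ⟨l1, l2, rfl⟩ := linear_of_totalDegree hlamd hlam0
  -- κ
  obtain ⟨κ, l, hk1, hk2⟩ : ∃ κ l : K, κ * s - l * r = l1 ∧ κ * t - l * s = l2 := by
    refine ⟨(r * l2 - s * l1) / (r * t - s^2), (s * l2 - t * l1) / (r * t - s^2), ?_, ?_⟩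
    · field_simp; ring
    · field_simp; ring
  have hlf : lf l1 l2 = C κ * lf s t - C l * lf r s := by
    rw [← hk1, ← hk2]; simp only [lf, map_sub, map_mul]; ring
  obtain ⟨B, hB0, hB1, hBd⟩ := lin_div (x := Tw D 0 κ c) (y := Tw E 1 l c) hdet (by
    rw [hlf] at hlam
    simp only [Tw]; linear_combination hlam)
  have hBd := hBd 2 ((Tw_totalDegree _ _ _ _).trans hcd)
  have hrs : r ≠ 0 ∨ s ≠ 0 := by
    by_contra h0; push Not at h0; simp [h0.1, h0.2] at hdet
  have b0 : constantCoeff B = -1 := by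
    have e1 := congrArg (fun x => constantCoeff (pderiv 0 x)) hB0
    have e2 := congrArg (fun x => constantCoeff (pderiv 1 x)) hB0
    simp only [Tw, map_sub, jet1, pderiv_nab, cc_nab, hc0, hc1, cc_lf, pd0_lf, pd1_lf,
      constantCoeff_C, H00, H01, H10, H11, pderiv_C, map_zero] at e1 e2
    rcases hrs with hr | hr
    · apply mul_right_cancel₀ hr; linear_combination -e1
    · apply mul_right_cancel₀ hr; linear_combination -e2
  have H3 : constantCoeff (pderiv 0 (pderiv 0 (pderiv 1 c))) =
      constantCoeff (pderiv 1 (pderiv 0 (pderiv 0 c))) := by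
    rw [pderiv_comm 0 1 c, pderiv_comm 0 1 (pderiv 0 c)]
  have H4 : constantCoeff (pderiv 1 (pderiv 0 (pderiv 1 c))) =
      constantCoeff (pderiv 0 (pderiv 1 (pderiv 1 c))) := by
    rw [pderiv_comm 0 1 (pderiv 1 c)]
  obtain ⟨hb0, hb1⟩ : constantCoeff (pderiv 0 B) = κ ∧ constantCoeff (pderiv 1 B) = l := by
    have e01 := congrArg (fun x => constantCoeff (pderiv 0 (pderiv 1 x))) hB0
    have e11 := congrArg (fun x => constantCoeff (pderiv 1 (pderiv 1 x))) hB0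
    have f00 := congrArg (fun x => constantCoeff (pderiv 0 (pderiv 0 x))) hB1
    have f01 := congrArg (fun x => constantCoeff (pderiv 0 (pderiv 1 x))) hB1
    simp only [Tw, map_sub, jet2, pderiv_nab, cc_nab, hc0, hc1, cc_lf, pd0_lf, pd1_lf,
      constantCoeff_C, H00, H01, H10, H11, pderiv_C, map_zero, H3, H4] at e01 e11 f00 f01
    generalize constantCoeff (pderiv 0 B) = x at *
    generalize constantCoeff (pderiv 1 B) = y at *
    have g1 : s * (x - κ) - r * (y - l) = 0 := by
      linear_combination e01 - f00 - hi1
    have g2 : t * (x - κ) - s * (y - l) = 0 := by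
      linear_combination e11 - f01 - hi2
    constructor
    · have : (r * t - s^2) * (x - κ) = 0 := by linear_combination r * g2 - s * g1
      exact sub_eq_zero.mp ((mul_eq_zero.mp this).resolve_left hdet)
    · have : (r * t - s^2) * (y - l) = 0 := by linear_combination s * g2 - t * g1
      exact sub_eq_zero.mp ((mul_eq_zero.mp this).resolve_left hdet)
  -- curvature
  have hcurv : Tw D 0 κ B * lf s t - Tw E 1 l B * lf r s = - C (D l - E κ) * c := by
    have h := Tw_comm D E hDE κ l c
    rw [hB0, hB1, Tw_mul, Tw_mul, nab_lf_comm D E r s t hi1 hi2] at h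
    linear_combination h
  have hω : D l = E κ := by
    have e00 := congrArg (fun x => constantCoeff (pderiv 0 (pderiv 0 x))) hcurv
    have e01 := congrArg (fun x => constantCoeff (pderiv 0 (pderiv 1 x))) hcurv
    have e11 := congrArg (fun x => constantCoeff (pderiv 1 (pderiv 1 x))) hcurv
    have H5 : constantCoeff (pderiv 1 (pderiv 0 B)) = constantCoeff (pderiv 0 (pderiv 1 B)) := by
      rw [pderiv_comm]
    rw [← C_neg] at e00 e01 e11
    simp only [Tw, map_sub, jet1, jet2, pderiv_nab, cc_nab, hc0, hc1, cc_lf, pd0_lf, pd1_lf,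
      constantCoeff_C, H00, H01, H10, H11, pderiv_C, map_zero, b0, hb0, hb1, H5] at e00 e01 e11
    have h4 : (4 * (r * t - s^2)) * (D l - E κ) = 0 := by
      linear_combination t * e00 + r * e11 - 2 * s * e01
    exact sub_eq_zero.mp ((mul_eq_zero.mp h4).resolve_left (mul_ne_zero (by norm_num) hdet))
  obtain ⟨B', hB'0, hB'1, hB'd⟩ := tower_step D E hDE hdet hi1 hi2 hω hB0 hB1
  obtain ⟨B'', hB''0, hB''1, hB''d⟩ := tower_step D E hDE hdet hi1 hi2 hω hB'0 hB'1
  obtain ⟨Z, hZ0, hZ1, -⟩ := tower_step D E hDE hdet hi1 hi2 hω hB''0 hB''1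
  have hB'd := hB'd 1 hBd
  have hB''d := hB''d 0 hB'd
  have Z0 : Tw D 0 κ B'' = 0 := by
    have := const_of_totalDegree ((Tw_totalDegree D 0 κ B'').trans hB''d)
    rw [this, hZ0, map_mul, cc_lf, mul_zero, map_zero]
  have Z1 : Tw E 1 l B'' = 0 := by
    have := const_of_totalDegree ((Tw_totalDegree E 1 l B'').trans hB''d)
    rw [this, hZ1, map_mul, cc_lf, mul_zero, map_zero]
  exact ⟨c, B, B', B'', κ, l, hcne, hc0, hcd, hBd, hB'd, hB''d, hB0, hB1, hB'0, hB'1, hB''0, hB''1,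
    Z0, Z1⟩

end core
end S18


namespace S18

lemma totalDegree_aeval_le {R σ τ : Type*} [CommRing R] [Fintype σ]
    (f : σ → MvPolynomial τ R) (hf : ∀ i, (f i).totalDegree ≤ 1) (p : MvPolynomial σ R) :
    (aeval f p).totalDegree ≤ p.totalDegree := by
  rw [aeval_def, eval₂_eq']
  refine totalDegree_finsetSum_le fun m hm => ?_
  refine (totalDegree_mul _ _).trans ?_
  refine le_trans ?_ (le_totalDegree hm)
  rw [algebraMap_eq, totalDegree_C, zero_add]
  refine (totalDegree_finset_prod _ _).trans ?_
  rw [Finsupp.sum_fintype _ _ (by simp)]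
  refine Finset.sum_le_sum fun i _ => ?_
  refine (totalDegree_pow _ _).trans ?_
  calc m i * (f i).totalDegree ≤ m i * 1 := Nat.mul_le_mul_left _ (hf i)
    _ = m i := mul_one _

section tower
variable {k K : Type*} [Field k] [Field K] [Algebra k K]

lemma descend_const {σ : Type*} (D E : Derivation k K K)
    (hconst : ∀ e, D e = 0 → E e = 0 → ∃ a : k, algebraMap k K a = e)
    (G : MvPolynomial σ K) (hG : G ≠ 0) (κ l : K) (h1 : cD D G = C κ * G) (h2 : cD E G = C l * G) :
    ∃ (γ : K) (G0 : MvPolynomial σ k), γ ≠ 0 ∧ G0 ≠ 0 ∧ G0.totalDegree ≤ G.totalDegree ∧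
      G = C γ * map (algebraMap k K) G0 := by
  classical
  obtain ⟨m0, hm0⟩ := ne_zero_iff.mp hG
  set γ := coeff m0 G with hγ
  have hD : ∀ (D : Derivation k K K) (κ : K), cD D G = C κ * G → ∀ m, D (coeff m G / γ) = 0 := by
    intro D κ h m
    have e1 := congrArg (coeff m) h
    have e2 := congrArg (coeff m0) h
    rw [coeff_cD, coeff_C_mul] at e1 e2
    have e3 : D (coeff m G / γ * γ) = D (coeff m G) := by rw [div_mul_cancel₀ _ hm0]
    rw [Derivation.leibniz, e1] at e3
    rw [← hγ] at e2
    rw [e2] at e3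
    simp only [smul_eq_mul] at e3
    refine (mul_eq_zero.mp (?_ : γ * D (coeff m G / γ) = 0)).resolve_left hm0
    have : coeff m G / γ * γ = coeff m G := div_mul_cancel₀ _ hm0
    linear_combination e3 - κ * this
  have hex : ∀ m, ∃ a : k, algebraMap k K a = coeff m G / γ :=
    fun m => hconst _ (hD D κ h1 m) (hD E l h2 m)
  choose a ha using hex
  have hco : ∀ m, algebraMap k K (coeff m (∑ n ∈ G.support, monomial n (a n))) = coeff m G / γ := by
    intro m
    simp only [coeff_sum, coeff_monomial]
    rw [Finset.sum_ite_eq' G.support m]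
    split_ifs with h
    · exact ha m
    · rw [notMem_support_iff.mp h]; simp
  have heq : G = C γ * map (algebraMap k K) (∑ n ∈ G.support, monomial n (a n)) := by
    ext m
    rw [coeff_C_mul, coeff_map, hco, mul_div_cancel₀ _ hm0]
  refine ⟨γ, ∑ n ∈ G.support, monomial n (a n), hm0, ?_, ?_, heq⟩
  · intro h0; rw [h0, map_zero, mul_zero] at heq; exact hG heq
  · refine totalDegree_finsetSum_le fun m hm => ?_
    exact (totalDegree_monomial_le _ _).trans (le_totalDegree hm)

theorem tower [CharZero K] (D E : Derivation k K K)
    (hconst : ∀ e, D e = 0 → E e = 0 → ∃ a : k, algebraMap k K a = e)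
    {x y z : K} (hDx : D x = 1) (hEx : E x = 0) (hDy : D y = 0) (hEy : E y = 1)
    (hDE : D (E z) = E (D z))
    (c B B' B'' : MvPolynomial (Fin 2) K) (κ l : K) (hcne : c ≠ 0) (hc0 : constantCoeff c = 0)
    (d0 : c.totalDegree ≤ 3) (d1 : B.totalDegree ≤ 2) (d2 : B'.totalDegree ≤ 1)
    (d3 : B''.totalDegree ≤ 0)
    (h1 : Tw D 0 κ c = B * lf (D (D z)) (D (E z))) (h2 : Tw E 1 l c = B * lf (D (E z)) (E (E z)))
    (h3 : Tw D 0 κ B = B' * lf (D (D z)) (D (E z))) (h4 : Tw E 1 l B = B' * lf (D (E z)) (E (E z)))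
    (h5 : Tw D 0 κ B' = B'' * lf (D (D z)) (D (E z)))
    (h6 : Tw E 1 l B' = B'' * lf (D (E z)) (E (E z)))
    (h7 : Tw D 0 κ B'' = 0) (h8 : Tw E 1 l B'' = 0) :
    ∃ G0 : MvPolynomial (Fin 3) k, G0 ≠ 0 ∧ G0.totalDegree ≤ 3 ∧ aeval ![x, y, z] G0 = 0 := by
  set u := D z with hu
  set v := E z with hv
  let θ : MvPolynomial (Fin 2) K →ₐ[K] MvPolynomial (Fin 3) K := aeval ![X 0 - C x, X 1 - C y]
  have θX0 : θ (X 0) = X 0 - C x := by simp [θ]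
  have θX1 : θ (X 1) = X 1 - C y := by simp [θ]
  have θC : ∀ a, θ (C a) = C a := by intro a; simp [θ]
  let ζ : MvPolynomial (Fin 3) K := X 2 - C z - C u * (X 0 - C x) - C v * (X 1 - C y)
  have cθ0 : ∀ q, cD D (θ q) = θ (nab D 0 q) := by
    intro q
    induction q using MvPolynomial.induction_on with
    | C a => rw [θC, cD_C, nab_C, θC]
    | add p q hp hq => simp only [map_add, hp, hq]
    | mul_X p i hp =>
      simp only [map_mul, Derivation.leibniz, smul_eq_mul, map_add, hp]
      fin_cases i
      · simp [θX0, nab_apply, hDx]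
      · simp [θX1, nab_apply, hDy]
  have cθ1 : ∀ q, cD E (θ q) = θ (nab E 1 q) := by
    intro q
    induction q using MvPolynomial.induction_on with
    | C a => rw [θC, cD_C, nab_C, θC]
    | add p q hp hq => simp only [map_add, hp, hq]
    | mul_X p i hp =>
      simp only [map_mul, Derivation.leibniz, smul_eq_mul, map_add, hp]
      fin_cases i
      · simp [θX0, nab_apply, hEx]
      · simp [θX1, nab_apply, hEy]
  have zζ0 : cD D ζ = - θ (lf (D u) (D v)) := by
    simp only [ζ, lf, map_sub, map_add, map_mul, Derivation.leibniz, smul_eq_mul, cD_C, cD_X, θX0, θX1,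
      θC, hDx, hDy, ← hu, map_one, map_zero]
    ring
  have zζ1 : cD E ζ = - θ (lf (D v) (E v)) := by
    simp only [ζ, lf, map_sub, map_add, map_mul, Derivation.leibniz, smul_eq_mul, cD_C, cD_X, θX0, θX1,
      θC, hEx, hEy, ← hv, map_one, map_zero, hDE]
    ring
  let G : MvPolynomial (Fin 3) K := 6 * θ c + 6 * θ B * ζ + 3 * θ B' * ζ ^ 2 + θ B'' * ζ ^ 3
  have c6 : (6 : MvPolynomial (Fin 3) K) = C 6 := (map_ofNat C 6).symm
  have c3 : (3 : MvPolynomial (Fin 3) K) = C 3 := (map_ofNat C 3).symm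
  have Tθ : ∀ (D : Derivation k K K) i κ q q', Tw D i κ q = q' → θ (nab D i q) = C κ * θ q + θ q' := by
    intro D i κ q q' h
    rw [← h, Tw, map_sub, map_mul, θC]; ring
  have hn : ∀ (D : Derivation k K K) (n : ℕ),
      cD D (OfNat.ofNat (n+2) : MvPolynomial (Fin 3) K) = 0 := by
    intro D n
    exact Derivation.map_natCast _ (n+2)
  have h6' : ∀ (D : Derivation k K K), cD D (6 : MvPolynomial (Fin 3) K) = 0 := fun D => hn D 4
  have h3' : ∀ (D : Derivation k K K), cD D (3 : MvPolynomial (Fin 3) K) = 0 := fun D => hn D 1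
  have hG0 : cD D G = C κ * G := by
    simp only [G, map_add, Derivation.leibniz, smul_eq_mul, Derivation.leibniz_pow, cθ0, zζ0,
      h6', h3', Tθ _ _ _ _ _ h1, Tθ _ _ _ _ _ h3, Tθ _ _ _ _ _ h5, Tθ _ _ _ _ _ h7, map_mul,
      map_zero, nsmul_eq_mul]
    push_cast
    ring
  have hG1 : cD E G = C l * G := by
    simp only [G, map_add, Derivation.leibniz, smul_eq_mul, Derivation.leibniz_pow, cθ1, zζ1,
      h6', h3', Tθ _ _ _ _ _ h2, Tθ _ _ _ _ _ h4, Tθ _ _ _ _ _ h6, Tθ _ _ _ _ _ h8, map_mul,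
      map_zero, nsmul_eq_mul]
    push_cast
    ring
  have hGne : G ≠ 0 := by
    intro h0
    let χ : MvPolynomial (Fin 3) K →ₐ[K] MvPolynomial (Fin 2) K :=
      aeval ![X 0 + C x, X 1 + C y, C z + C u * X 0 + C v * X 1]
    have hχζ : χ ζ = 0 := by
      simp [χ, ζ, ← algebraMap_eq]; ring
    have hχθ : ∀ q, χ (θ q) = q := by
      intro q
      have : χ.comp θ = AlgHom.id K _ := by
        ext i
        fin_cases i <;> simp [χ, θ, ← algebraMap_eq]
      exact DFunLike.congr_fun this q
    have := congrArg χ h0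
    simp only [G, map_add, map_mul, map_pow, hχζ, hχθ, map_zero] at this
    have h60 : (6 : MvPolynomial (Fin 2) K) * c = 0 := by
      have e : χ 6 = 6 := map_ofNat χ 6
      rw [e] at this
      linear_combination this
    rcases mul_eq_zero.mp h60 with h | h
    · norm_num at h
    · exact hcne h
  have hζd : ζ.totalDegree ≤ 1 := by
    have hXC : ∀ (i : Fin 3) (a : K), (X i - C a : MvPolynomial (Fin 3) K).totalDegree ≤ 1 := by
      intro i a
      exact (totalDegree_sub _ _).trans (max_le (by simp) (by simp))
    refine (totalDegree_sub _ _).trans (max_le ((totalDegree_sub _ _).trans (max_le (hXC _ _) ?_)) ?_)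
    · refine (totalDegree_mul _ _).trans ?_
      rw [totalDegree_C, zero_add]; exact hXC _ _
    · refine (totalDegree_mul _ _).trans ?_
      rw [totalDegree_C, zero_add]; exact hXC _ _
  have hθd : ∀ q, (θ q).totalDegree ≤ q.totalDegree := by
    refine totalDegree_aeval_le _ fun i => ?_
    fin_cases i
    · exact (totalDegree_sub _ _).trans (max_le (by simp) (by simp))
    · exact (totalDegree_sub _ _).trans (max_le (by simp) (by simp))
  have hGd : G.totalDegree ≤ 3 := by
    have p2 : (ζ^2).totalDegree ≤ 2 := (totalDegree_pow _ _).trans (by omega)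
    have p3 : (ζ^3).totalDegree ≤ 3 := (totalDegree_pow _ _).trans (by omega)
    have q0 := hθd c
    have q1 := hθd B
    have q2 := hθd B'
    have q3 := hθd B''
    have t6 : (6 : MvPolynomial (Fin 3) K).totalDegree = 0 := by rw [c6, totalDegree_C]
    have t3 : (3 : MvPolynomial (Fin 3) K).totalDegree = 0 := by rw [c3, totalDegree_C]
    have m0 := totalDegree_mul 6 (θ c)
    have m1 := totalDegree_mul 6 (θ B)
    have m1' := totalDegree_mul (6 * θ B) ζ
    have m2 := totalDegree_mul 3 (θ B')
    have m2' := totalDegree_mul (3 * θ B') (ζ^2)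
    have m3 := totalDegree_mul (θ B'') (ζ^3)
    refine (totalDegree_add _ _).trans (max_le ((totalDegree_add _ _).trans
      (max_le ((totalDegree_add _ _).trans (max_le ?_ ?_)) ?_)) ?_) <;> omega
  have hGx : eval ![x, y, z] G = 0 := by
    have e1 : eval ![x, y, z] ζ = 0 := by simp [ζ]
    have e2 : ∀ q, eval ![x, y, z] (θ q) = constantCoeff q := by
      intro q
      have : (aeval ![x, y, z] : _ →ₐ[K] K).comp θ = aeval (fun _ => (0:K)) := by
        ext i
        fin_cases i <;> simp [θ]
      have := DFunLike.congr_fun this q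
      simpa [aeval_def, eval₂_eq_eval_map, constantCoeff_eq] using this
    simp only [G, map_add, map_mul, map_pow, e1, e2, hc0]
    simp
  obtain ⟨γ, G0, hγ, hG0ne, hG0d, hG0e⟩ := descend_const D E hconst G hGne κ l hG0 hG1
  refine ⟨G0, hG0ne, hG0d.trans hGd, ?_⟩
  rw [hG0e, map_mul, eval_C, eval_map] at hGx
  exact (mul_eq_zero.mp hGx).resolve_left hγ

end tower
end S18


namespace S18

lemma rh_aeval {k A B σ : Type*} [CommRing k] [CommRing A] [CommRing B] [Algebra k A] [Algebra k B]
    (g : A →+* B) (hg : ∀ a : k, g (algebraMap k A a) = algebraMap k B a) (Y : σ → A)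
    (F : MvPolynomial σ k) : g (aeval Y F) = aeval (fun i => g (Y i)) F := by
  induction F using MvPolynomial.induction_on with
  | C a => simp [hg]
  | add p q hp hq => simp [hp, hq]
  | mul_X p i hp => simp [hp]

section geom
variable {k K : Type*} [Field k] [Field K] [Algebra k K]

lemma quad_of_totalDegree {q : MvPolynomial (Fin 2) K} (h : q.totalDegree ≤ 2)
    (h0 : constantCoeff q = 0) (h1 : ∀ j, constantCoeff (pderiv j q) = 0) :
    ∃ a b c, q = C a * X 0 ^ 2 + C b * (X 0 * X 1) + C c * X 1 ^ 2 := by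
  classical
  have hm : ∀ m : Fin 2 →₀ ℕ, m = Finsupp.single 0 (m 0) + Finsupp.single 1 (m 1) := by
    intro m; ext i; fin_cases i <;> simp
  refine ⟨coeff (Finsupp.single 0 2) q, coeff (Finsupp.single 0 1 + Finsupp.single 1 1) q,
    coeff (Finsupp.single 1 2) q, ?_⟩
  have e : ∀ a b c : K, (C a * X 0 ^ 2 + C b * (X 0 * X 1) + C c * X 1 ^ 2 : MvPolynomial (Fin 2) K)
      = monomial (Finsupp.single 0 2) a + monomial (Finsupp.single 0 1 + Finsupp.single 1 1) b
        + monomial (Finsupp.single 1 2) c := by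
    intro a b c
    rw [X_pow_eq_monomial, X_pow_eq_monomial, X, X, monomial_mul, C_mul_monomial, C_mul_monomial,
      C_mul_monomial]
    simp
  rw [e]
  have hl : ∀ j, coeff (Finsupp.single j 1) q = 0 := by
    intro j
    have := h1 j
    rw [constantCoeff_eq, coeff_pderiv] at this
    simpa using this
  have heq : ∀ m n : Fin 2 →₀ ℕ, m = n ↔ m 0 = n 0 ∧ m 1 = n 1 := by
    intro m n
    constructor
    · rintro rfl; exact ⟨rfl, rfl⟩
    · rintro ⟨h1, h2⟩; rw [hm m, hm n, h1, h2]
  ext m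
  simp only [coeff_add, coeff_monomial, heq]
  simp only [Finsupp.add_apply, Finsupp.single_apply]
  simp only [Fin.isValue, one_ne_zero, zero_ne_one, if_true, if_false, add_zero, zero_add]
  by_cases hd : m 0 + m 1 ≤ 2
  · have h00 : coeff (Finsupp.single 0 0 + Finsupp.single 1 0) q = 0 := by
      simpa [constantCoeff_eq] using h0
    have h10 := hl 0
    have h01 := hl 1
    rw [hm m]
    generalize m 0 = a at *
    generalize m 1 = b at *
    have ha : a ≤ 2 := by omega
    have hb : b ≤ 2 := by omega
    interval_cases a <;> interval_cases b <;> simp_all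
  · have h1 : coeff m q = 0 := by
      by_contra h2
      have := le_totalDegree (mem_support_iff.mpr h2)
      rw [Finsupp.sum_fintype _ _ (by simp), Fin.sum_univ_two] at this
      omega
    rw [h1, if_neg (by omega), if_neg (by omega), if_neg (by omega)]
    simp

lemma quad_zero [IsAlgClosed K] [CharZero K] (a b c : K) :
    ∃ ρ : Fin 2 → K, ρ ≠ 0 ∧ a * ρ 0 ^ 2 + b * (ρ 0 * ρ 1) + c * ρ 1 ^ 2 = 0 := by
  by_cases ha : a = 0
  · exact ⟨![1, 0], fun h => by simpa using congrFun h 0, by simp [ha]⟩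
  · obtain ⟨δ, hδ⟩ := IsAlgClosed.exists_eq_mul_self (discrim a b c)
    have : NeZero (2 : K) := ⟨two_ne_zero⟩
    obtain ⟨T, hT⟩ := exists_quadratic_eq_zero ha ⟨δ, hδ⟩
    exact ⟨![T, 1], fun h => by simpa using congrFun h 1, by simp; linear_combination hT⟩

lemma ode_zero [CharZero K] (Δ : Derivation k K K) (F : MvPolynomial (Fin 4) k) (P w : Fin 4 → K)
    (hP : aeval P F = 0) (h1 : ∀ i, Δ (P i) = w i) (h2 : ∀ i, Δ (w i) = 0) (τ : K) :
    aeval (fun i => P i + τ * w i) F = 0 := by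
  classical
  let Y : Fin 4 → MvPolynomial (Fin 1) K := fun i => C (P i) + C (w i) * X 0
  let φ : MvPolynomial (Fin 1) K := aeval Y F
  let N : Derivation k (MvPolynomial (Fin 1) K) (MvPolynomial (Fin 1) K) :=
    cD Δ - (pderiv 0).restrictScalars k
  have hN : ∀ p, N p = cD Δ p - pderiv 0 p := fun p => rfl
  have hNY : ∀ i, N (Y i) = 0 := by
    intro i
    rw [hN]
    simp [Y, h1, h2]
  have hφ : N φ = 0 := by
    rw [chain_rule]; simp [hNY]
  have hco : ∀ n : ℕ, coeff (Finsupp.single 0 n) φ = 0 := by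
    intro n
    induction n with
    | zero =>
      have := rh_aeval (k := k) (constantCoeff : MvPolynomial (Fin 1) K →+* K)
        (fun a => by rw [IsScalarTower.algebraMap_apply k K (MvPolynomial (Fin 1) K)]; simp) Y F
      simp only [Finsupp.single_zero, ← constantCoeff_eq]
      rw [this]
      simpa [Y] using hP
    | succ n ih =>
      have := congrArg (coeff (Finsupp.single 0 n)) hφ
      rw [hN, coeff_sub, coeff_cD, ih, map_zero, coeff_pderiv, ← Finsupp.single_add] at this
      simp only [coeff_zero, zero_sub, neg_eq_zero, Finsupp.single_eq_same, mul_eq_zero] at this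
      exact this.resolve_right (Nat.cast_add_one_ne_zero n)
  have hφ0 : φ = 0 := by
    ext m
    have : m = Finsupp.single 0 (m 0) := Finsupp.ext fun i => by fin_cases i; simp
    rw [this, hco, coeff_zero]
  have := rh_aeval (k := k) (eval (fun _ => τ) : MvPolynomial (Fin 1) K →+* K)
        (fun a => by rw [IsScalarTower.algebraMap_apply k K (MvPolynomial (Fin 1) K)]; simp) Y F
  rw [show aeval Y F = φ from rfl, hφ0, map_zero] at this
  rw [this]
  congr 2
  ext i
  simp [Y, mul_comm]

lemma nondeg [CharZero K] (D E : Derivation k K K) (hDE : ∀ a, D (E a) = E (D a))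
    {x y z : K} (hDx : D x = 1) (hEx : E x = 0) (hDy : D y = 0) (hEy : E y = 1)
    (F : MvPolynomial (Fin 4) k) (hP : aeval ![1, x, y, z] F = 0)
    (hnl : ∀ w : Fin 4 → K, w 0 = 0 → w ≠ 0 → ∃ τ : K, aeval (fun i => ![1, x, y, z] i + τ * w i) F ≠ 0) :
    D (D z) * E (E z) - (D (E z)) ^ 2 ≠ 0 := by
  intro hdet
  suffices h : ∃ w1 w2 : K, (w1 ≠ 0 ∨ w2 ≠ 0) ∧ w1 * D (D z) + w2 * D (E z) = 0 ∧
      w1 * D (E z) + w2 * E (E z) = 0 ∧ w1 * D w1 + w2 * E w1 = 0 ∧ w1 * D w2 + w2 * E w2 = 0 by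
    obtain ⟨w1, w2, hne, e1, e2, e3, e4⟩ := h
    obtain ⟨τ, hτ⟩ := hnl ![0, w1, w2, w1 * D z + w2 * E z] rfl (by
      intro h
      have h1 := congrFun h 1
      have h2 := congrFun h 2
      simp at h1 h2
      rcases hne with h | h
      · exact h h1
      · exact h h2)
    apply hτ
    apply ode_zero (w1 • D + w2 • E) F ![1, x, y, z] _ hP
    · intro i
      fin_cases i <;> simp [hDx, hEx, hDy, hEy]
    · intro i
      fin_cases i
      · simp
      · simpa using e3
      · simpa using e4
      · simp
        rw [← hDE z]
        linear_combination w1 * e1 + w2 * e2 + D z * e3 + E z * e4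
  by_cases hs : D (E z) = 0
  · rw [hs] at hdet
    have : D (D z) * E (E z) = 0 := by linear_combination hdet
    rcases mul_eq_zero.mp this with h | h
    · exact ⟨1, 0, by simp, by simp [h], by simp [hs], by simp, by simp⟩
    · exact ⟨0, 1, by simp, by simp [hs], by simp [h], by simp, by simp⟩
  · obtain ⟨w, hw⟩ : ∃ w, w = - D (D z) / D (E z) := ⟨_, rfl⟩
    have f1 : D (E z) * w = - D (D z) := by rw [hw]; field_simp
    have f2 : E (E z) * w = - D (E z) := by
      apply mul_left_cancel₀ hs
      linear_combination E (E z) * f1 - hdet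
    refine ⟨1, w, by simp, by linear_combination f1, by linear_combination f2, by simp, ?_⟩
    have g1 := congrArg E f1
    have g2 := congrArg D f2
    simp only [Derivation.leibniz, smul_eq_mul, map_neg] at g1 g2
    have i1 : D (D (E z)) = E (D (D z)) := by rw [hDE z, hDE]
    have i2 : D (E (E z)) = E (D (E z)) := by rw [hDE]
    apply mul_left_cancel₀ hs
    rw [i1, i2] at g2
    linear_combination w * g1 - w * g2 + D w * f2

/-- restriction to tangent plane -/
noncomputable def tp {A : Type*} [CommRing A] [Algebra k A] (F : MvPolynomial (Fin 4) k)
    (x y z u v : A) : MvPolynomial (Fin 2) A :=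
  aeval ![1, C x + X 0, C y + X 1, C z + C u * X 0 + C v * X 1] F

lemma algMap_C {A σ : Type*} [CommRing A] [Algebra k A] (a : k) :
    algebraMap k (MvPolynomial σ A) a = C (algebraMap k A a) := by
  rw [IsScalarTower.algebraMap_apply k A (MvPolynomial σ A)]; rfl

lemma eval_tp {A : Type*} [CommRing A] [Algebra k A] (F : MvPolynomial (Fin 4) k)
    (x y z u v : A) (ρ : Fin 2 → A) :
    eval ρ (tp F x y z u v) = aeval ![1, x + ρ 0, y + ρ 1, z + u * ρ 0 + v * ρ 1] F := by
  have := rh_aeval (k := k) (eval ρ : MvPolynomial (Fin 2) A →+* A)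
        (fun a => by rw [algMap_C]; simp)
        ![1, C x + X 0, C y + X 1, C z + C u * X 0 + C v * X 1] F
  rw [tp, this]
  congr 2
  ext i; fin_cases i <;> simp

lemma cc_tp {A : Type*} [CommRing A] [Algebra k A] (F : MvPolynomial (Fin 4) k)
    (x y z u v : A) :
    constantCoeff (tp F x y z u v) = aeval ![1, x, y, z] F := by
  have := rh_aeval (k := k) (constantCoeff : MvPolynomial (Fin 2) A →+* A)
        (fun a => by rw [algMap_C]; simp)
        ![1, C x + X 0, C y + X 1, C z + C u * X 0 + C v * X 1] F
  rw [tp, this]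
  congr 2
  ext i; fin_cases i <;> simp

lemma map_tp {A B : Type*} [CommRing A] [Algebra k A] [CommRing B] [Algebra k B] (f : A →+* B)
    (hf : ∀ a : k, f (algebraMap k A a) = algebraMap k B a) (F : MvPolynomial (Fin 4) k)
    (x y z u v : A) :
    map f (tp F x y z u v) = tp F (f x) (f y) (f z) (f u) (f v) := by
  have := rh_aeval (k := k) (map f : MvPolynomial (Fin 2) A →+* MvPolynomial (Fin 2) B)
        (fun a => by rw [algMap_C, algMap_C]; simp [hf])
        ![1, C x + X 0, C y + X 1, C z + C u * X 0 + C v * X 1] F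
  rw [tp, this, tp]
  congr 2
  ext i; fin_cases i <;> simp

theorem geom [IsAlgClosed K] [CharZero K] (D E : Derivation k K K) (hDE : ∀ a, D (E a) = E (D a))
    (hconst : ∀ e, D e = 0 → E e = 0 → ∃ a : k, algebraMap k K a = e)
    {x y z : K} (hDx : D x = 1) (hEx : E x = 0) (hDy : D y = 0) (hEy : E y = 1)
    (F : MvPolynomial (Fin 4) k) (hP : aeval ![1, x, y, z] F = 0)
    (hP3 : aeval ![1, x, y, z] (pderiv 3 F) ≠ 0)
    (hnl : ∀ w : Fin 4 → K, w 0 = 0 → w ≠ 0 → ∃ τ : K, aeval (fun i => ![1, x, y, z] i + τ * w i) F ≠ 0)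
    (hgen : ∀ G0 : MvPolynomial (Fin 3) k, G0 ≠ 0 → G0.totalDegree ≤ 3 → aeval ![x, y, z] G0 ≠ 0) :
    ∃ u v : K, aeval ![1, x, y, z] (pderiv 1 F) + u * aeval ![1, x, y, z] (pderiv 3 F) = 0 ∧
      aeval ![1, x, y, z] (pderiv 2 F) + v * aeval ![1, x, y, z] (pderiv 3 F) = 0 ∧
      (¬ ∀ i j, constantCoeff (pderiv i (pderiv j (tp F x y z u v))) = 0) ∧
      ¬ ∃ c g, c * g = tp F x y z u v ∧ c.totalDegree ≤ 3 ∧ constantCoeff c = 0 ∧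
        ∀ j, constantCoeff (pderiv j c) = 0 := by
  have hdet := nondeg D E hDE hDx hEx hDy hEy F hP hnl
  obtain ⟨u, hu⟩ : ∃ u, u = D z := ⟨_, rfl⟩
  obtain ⟨v, hv⟩ : ∃ v, v = E z := ⟨_, rfl⟩
  obtain ⟨p, hp⟩ : ∃ p, p = tp F x y z u v := ⟨_, rfl⟩
  obtain ⟨h, hh⟩ : ∃ h, h = tp (pderiv 3 F) x y z u v := ⟨_, rfl⟩
  have hh0 : constantCoeff h ≠ 0 := by rw [hh, cc_tp]; exact hP3
  have n0 : nab D 0 p = h * lf (D u) (D v) := by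
    rw [hp, hh, tp, chain_rule, Fin.sum_univ_four]
    have t0 : nab D 0 (C x + X 0) = 0 := by simp [nab_apply, hDx]
    have t1 : nab D 0 (C y + X 1) = 0 := by simp [nab_apply, hDy]
    have t2 : nab D 0 (C z + C u * X 0 + C v * X 1) = lf (D u) (D v) := by
      simp [nab_apply, ← hu, lf, mul_comm]
      ring
    simp [t0, t1, t2, tp]
  have n1 : nab E 1 p = h * lf (D v) (E v) := by
    rw [hp, hh, tp, chain_rule, Fin.sum_univ_four]
    have t0 : nab E 1 (C x + X 0) = 0 := by simp [nab_apply, hEx]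
    have t1 : nab E 1 (C y + X 1) = 0 := by simp [nab_apply, hEy]
    have t2 : nab E 1 (C z + C u * X 0 + C v * X 1) = lf (D v) (E v) := by
      have : D v = E u := by rw [hu, hv, hDE]
      rw [this]
      simp [nab_apply, ← hv, lf, mul_comm]
      ring
    simp [t0, t1, t2, tp]
  rw [← hu, ← hv] at hdet
  have i1 : D (D v) = E (D u) := by rw [hu, hv, hDE z, hDE]
  have i2 : D (E v) = E (D v) := by rw [hDE]
  have hF1 := chain_rule D ![1, x, y, z] F
  have hF2 := chain_rule E ![1, x, y, z] F
  rw [hP, map_zero, Fin.sum_univ_four] at hF1 hF2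
  simp [hDx, hDy, hEx, hEy, ← hu, ← hv] at hF1 hF2
  refine ⟨u, v, by linear_combination -hF1, by linear_combination -hF2, ?_, ?_⟩
  · rw [← hp]
    intro hz
    have q1 : ∀ j, constantCoeff (pderiv j p) = 0 := by
      have e0 : ∀ j, pderiv j p = cD (![D, E] j) p - nab (![D, E] j) j p := by
        intro j; rw [nab_apply]; ring
      intro j
      rw [e0, map_sub, cc_cD]
      have : constantCoeff p = 0 := by rw [hp, cc_tp, hP]
      rw [this, map_zero]
      fin_cases j
      · simp [n0, cc_lf]
      · simp [n1, cc_lf]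
    have e1 := congrArg (fun x => constantCoeff (pderiv 0 x)) n0
    have e2 := congrArg (fun x => constantCoeff (pderiv 1 x)) n0
    simp only [pderiv_nab, cc_nab, q1, hz, jet1, cc_lf, pd0_lf, pd1_lf,
      constantCoeff_C, map_zero, mul_zero, zero_add, sub_zero] at e1 e2
    have e1 := (mul_eq_zero.mp e1.symm).resolve_left hh0
    have e2 := (mul_eq_zero.mp e2.symm).resolve_left hh0
    apply hdet; rw [e1, e2]; ring
  · rw [← hp]
    rintro ⟨c, g, hcg, hcd, hc0, hc1⟩
    have hQ : ∀ q, q ∣ p → q.totalDegree ≤ 2 → constantCoeff q = 0 →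
      (∀ j, constantCoeff (pderiv j q) = 0) → False := by
      rintro q ⟨q', hq'⟩ hqd hq0 hq1
      obtain ⟨a, b, e, hq⟩ := quad_of_totalDegree hqd hq0 hq1
      obtain ⟨ρ, hρ, hρ0⟩ := quad_zero a b e
      obtain ⟨τ, hτ⟩ := hnl ![0, ρ 0, ρ 1, u * ρ 0 + v * ρ 1] rfl (by
        intro h
        apply hρ
        have h1 := congrFun h 1
        have h2 := congrFun h 2
        ext i
        fin_cases i
        · simpa using h1
        · simpa using h2)
      apply hτ
      have ev := eval_tp F x y z u v (fun i => τ * ρ i)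
      rw [← hp, hq', hq] at ev
      simp only [map_mul, map_add, map_pow, eval_C, eval_X] at ev
      have : a * (τ * ρ 0) ^ 2 + b * (τ * ρ 0 * (τ * ρ 1)) + e * (τ * ρ 1) ^ 2 = 0 := by
        linear_combination τ^2 * hρ0
      rw [this, zero_mul] at ev
      refine Eq.trans ?_ ev.symm
      congr 2
      ext i
      fin_cases i <;> simp <;> ring
    obtain ⟨c, B, B', B'', κ, l, a1, a2, a3, a4, a5, a6, b1, b2, b3, b4, b5, b6, b7, b8⟩ :=
      core D E hDE hdet i1 i2 n0 n1 hh0 hQ hcg hcd hc0 hc1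
    simp only [hu, hv] at b1 b2 b3 b4 b5 b6
    obtain ⟨G0, g1, g2, g3⟩ := tower D E hconst hDx hEx hDy hEy (hDE z) c B B' B'' κ l a1 a2 a3 a4 a5
      a6 b1 b2 b3 b4 b5 b6 b7 b8
    exact hgen G0 g1 g2 g3
end geom
end S18


namespace S18

section fieldK
variable {k K : Type*} [Field k] [Field K] [Algebra k K] 

open TensorProduct KaehlerDifferential in
lemma exists_ext_derivation [Algebra (MvPolynomial (Fin 2) k) K]
    [IsScalarTower k (MvPolynomial (Fin 2) k) K]
    [Algebra.FormallyEtale (MvPolynomial (Fin 2) k) K] (f : Fin 2 → K) :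
    ∃ D : Derivation k K K, ∀ i, D (algebraMap (MvPolynomial (Fin 2) k) K (X i)) = f i := by
  let d : Derivation k (MvPolynomial (Fin 2) k) K := mkDerivation k f
  let l : Ω[MvPolynomial (Fin 2) k⁄k] →ₗ[MvPolynomial (Fin 2) k] K := d.liftKaehlerDifferential
  let l' := l.liftBaseChange K
  let l'' := l' ∘ₗ (tensorKaehlerEquivOfFormallyEtale k (MvPolynomial (Fin 2) k) K).symm.toLinearMap
  refine ⟨l''.compDer (KaehlerDifferential.D k K), fun i => ?_⟩
  have := tensorKaehlerEquivOfFormallyEtale_symm_D_algebraMap k (MvPolynomial (Fin 2) k) K (X i)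
  simp only [l'', LinearMap.compDer, LinearMap.coe_mk, AddHom.coe_mk]
  show l' ((tensorKaehlerEquivOfFormallyEtale k (MvPolynomial (Fin 2) k) K).symm (D k K _)) = _
  rw [this, LinearMap.liftBaseChange_one_tmul]
  simp [l, d]

open TensorProduct KaehlerDifferential in
lemma derivation_unique [Algebra (MvPolynomial (Fin 2) k) K]
    [IsScalarTower k (MvPolynomial (Fin 2) k) K]
    [Algebra.FormallyEtale (MvPolynomial (Fin 2) k) K] (δ : Derivation k K K)
    (h : ∀ i, δ (algebraMap (MvPolynomial (Fin 2) k) K (X i)) = 0) (a : K) : δ a = 0 := by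
  have h0 : δ.compAlgebraMap (MvPolynomial (Fin 2) k) = 0 := by
    apply MvPolynomial.derivation_ext
    intro i
    simpa using h i
  have h1 : ∀ b, δ (algebraMap (MvPolynomial (Fin 2) k) K b) = 0 := by
    intro b; exact DFunLike.congr_fun h0 b
  let δ' : Derivation (MvPolynomial (Fin 2) k) K K := Derivation.mk'
    { toFun := δ
      map_add' := map_add δ
      map_smul' := fun b x => by
        simp [Algebra.smul_def, h1] }
    (fun a b => by simp)
  have : δ' = 0 := by
    rw [← δ'.liftKaehlerDifferential_comp]
    ext x
    simp only [LinearMap.compDer, LinearMap.coe_mk, AddHom.coe_mk]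
    show δ'.liftKaehlerDifferential (D _ K x) = 0
    rw [Subsingleton.elim (D (MvPolynomial (Fin 2) k) K x) 0, map_zero]
  exact DFunLike.congr_fun this a

lemma pderiv_totalDegree_lt {R σ : Type*} [CommRing R] (i : σ) (p : MvPolynomial σ R)
    (h : pderiv i p ≠ 0) :
    (pderiv i p).totalDegree < p.totalDegree := by
  classical
  have key : ∀ m ∈ (pderiv i p).support, (m.sum fun _ e => e) + 1 ≤ p.totalDegree := by
    intro m hm
    rw [mem_support_iff, coeff_pderiv] at hm
    have : m + Finsupp.single i 1 ∈ p.support := by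
      rw [mem_support_iff]; intro h; simp [h] at hm
    refine le_trans ?_ (le_totalDegree this)
    rw [Finsupp.sum_add_index' (by simp) (by simp)]
    simp
  obtain ⟨m, hm⟩ := support_nonempty.mpr h
  have h0 := key m hm
  rw [totalDegree]
  rw [Finset.sup_lt_iff (by simp; omega)]
  intro m hm
  exact key m hm

lemma constants [IsAlgClosed k] [CharZero k] (D E : Derivation k K K) {x y : K}
    (hDx : D x = 1) (hEx : E x = 0) (hDy : D y = 0) (hEy : E y = 1)
    (halg : ∀ e : K, ∃ H : MvPolynomial (Fin 3) k, H ≠ 0 ∧ aeval ![e, x, y] H = 0) (e : K)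
    (h1 : D e = 0) (h2 : E e = 0) : ∃ a : k, algebraMap k K a = e := by
  classical
  have hex : ∃ n, ∃ H : MvPolynomial (Fin 3) k, H ≠ 0 ∧ aeval ![e, x, y] H = 0 ∧
      H.totalDegree = n := by
    obtain ⟨H, a, b⟩ := halg e
    exact ⟨_, H, a, b, rfl⟩
  obtain ⟨H, hH, hH0, hHd⟩ := Nat.find_spec hex
  have hmin : ∀ G : MvPolynomial (Fin 3) k, aeval ![e, x, y] G = 0 →
      G.totalDegree < H.totalDegree → G = 0 := by
    intro G hG hlt
    by_contra hne
    rw [hHd] at hlt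
    exact Nat.find_min hex hlt ⟨G, hne, hG, rfl⟩
  have p1 : pderiv 1 H = 0 := by
    by_contra hne
    apply hne
    apply hmin _ _ (pderiv_totalDegree_lt _ _ hne)
    have := chain_rule D ![e, x, y] H
    rw [hH0, map_zero, Fin.sum_univ_three] at this
    simp [h1, hDx, hDy] at this
    exact this.symm
  have p2 : pderiv 2 H = 0 := by
    by_contra hne
    apply hne
    apply hmin _ _ (pderiv_totalDegree_lt _ _ hne)
    have := chain_rule E ![e, x, y] H
    rw [hH0, map_zero, Fin.sum_univ_three] at this
    simp [h2, hEx, hEy] at this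
    exact this.symm
  have hz : ∀ i, pderiv i H = 0 → ∀ m ∈ H.support, m i = 0 := by
    intro i hi m hm
    by_contra hne
    have := congrArg (coeff (m - Finsupp.single i 1)) hi
    have hle : Finsupp.single i 1 ≤ m := by
      rw [Finsupp.single_le_iff]; omega
    rw [coeff_pderiv, coeff_zero, tsub_add_cancel_of_le hle] at this
    rcases mul_eq_zero.mp this with h | h
    · exact (mem_support_iff.mp hm) h
    · exact (Nat.cast_add_one_ne_zero _) h
  let f : Polynomial k := ∑ m ∈ H.support, Polynomial.monomial (m 0) (coeff m H)
  have hf0 : f ≠ 0 := by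
    obtain ⟨m, hm⟩ := support_nonempty.mpr hH
    intro h0
    have := congrArg (fun f => Polynomial.coeff f (m 0)) h0
    simp only [f, Polynomial.finset_sum_coeff, Polynomial.coeff_monomial, Polynomial.coeff_zero] at this
    rw [Finset.sum_eq_single m] at this
    · simp at this
      exact (mem_support_iff.mp hm) this
    · intro n hn hnm
      rw [if_neg]
      intro h
      apply hnm
      ext i
      fin_cases i
      · exact h
      · simp [hz 1 p1 _ hm, hz 1 p1 _ hn]
      · simp [hz 2 p2 _ hm, hz 2 p2 _ hn]
    · intro h; exact absurd hm h
  have hfe : Polynomial.aeval e f = 0 := by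
    rw [← hH0, aeval_def, eval₂_eq', map_sum]
    refine Finset.sum_congr rfl fun m hm => ?_
    rw [Polynomial.aeval_monomial, Fin.prod_univ_three, hz 1 p1 _ hm, hz 2 p2 _ hm]
    simp
  have hint : IsIntegral k e := IsAlgebraic.isIntegral ⟨f, hf0, hfe⟩
  have := IsAlgClosed.degree_eq_one_of_irreducible k (minpoly.irreducible hint)
  exact minpoly.mem_range_of_degree_eq_one k e this

end fieldK

theorem fieldK (k : Type*) [Field k] [IsAlgClosed k] [CharZero k] :
    let K := AlgebraicClosure (FractionRing (MvPolynomial (Fin 2) k))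
    let x : K := algebraMap (MvPolynomial (Fin 2) k) K (X 0)
    let y : K := algebraMap (MvPolynomial (Fin 2) k) K (X 1)
    CharZero K ∧
    ∃ D E : Derivation k K K, (∀ a, D (E a) = E (D a)) ∧ D x = 1 ∧ E x = 0 ∧ D y = 0 ∧ E y = 1 ∧
      ∀ e, D e = 0 → E e = 0 → ∃ a : k, algebraMap k K a = e := by
  intro K x y
  have hcz : CharZero K := charZero_of_injective_algebraMap (algebraMap k K).injective
  have hcz' : CharZero (FractionRing (MvPolynomial (Fin 2) k)) :=
    charZero_of_injective_algebraMap (algebraMap k _).injective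
  have : Algebra.FormallyEtale (MvPolynomial (Fin 2) k) (FractionRing (MvPolynomial (Fin 2) k)) :=
    Algebra.FormallyEtale.of_isLocalization (nonZeroDivisors _)
  have : Algebra.FormallyEtale (FractionRing (MvPolynomial (Fin 2) k)) K :=
    Algebra.FormallyEtale.of_isSeparable _ _
  have : Algebra.FormallyEtale (MvPolynomial (Fin 2) k) K :=
    Algebra.FormallyEtale.comp _ (FractionRing (MvPolynomial (Fin 2) k)) _
  obtain ⟨D, hD⟩ := exists_ext_derivation (k := k) (K := K) ![1, 0]
  obtain ⟨E, hE⟩ := exists_ext_derivation (k := k) (K := K) ![0, 1]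
  have hDx : D x = 1 := hD 0
  have hDy : D y = 0 := hD 1
  have hEx : E x = 0 := hE 0
  have hEy : E y = 1 := hE 1
  refine ⟨hcz, D, E, ?_, hDx, hEx, hDy, hEy, ?_⟩
  · intro a
    have := derivation_unique (k := k) (K := K) ⁅D, E⁆ (fun i => by
      rw [Derivation.commutator_apply]
      fin_cases i
      · show D (E x) - E (D x) = 0
        simp [hDx, hEx]
      · show D (E y) - E (D y) = 0
        simp [hDy, hEy]) a
    rw [Derivation.commutator_apply] at this
    exact sub_eq_zero.mp this
  · apply constants D E hDx hEx hDy hEy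
    intro e
    have halg : IsAlgebraic (FractionRing (MvPolynomial (Fin 2) k)) e := Algebra.IsAlgebraic.isAlgebraic e
    have halg : IsAlgebraic (MvPolynomial (Fin 2) k) e :=
      (IsFractionRing.isAlgebraic_iff (MvPolynomial (Fin 2) k)
        (FractionRing (MvPolynomial (Fin 2) k)) K).mpr halg
    obtain ⟨f, hf, hfe⟩ := halg
    refine ⟨(finSuccEquiv k 2).symm f, by simpa using hf, ?_⟩
    have : aeval ![e, x, y] = ((Polynomial.aeval e : Polynomial (MvPolynomial (Fin 2) k) →ₐ[_] K).restrictScalars k).comp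
        (finSuccEquiv k 2).toAlgHom := by
      ext i
      fin_cases i
      · simp [finSuccEquiv_X_zero]
      · have := finSuccEquiv_X_succ (R := k) (n := 2) (j := 0)
        simp at this ⊢
        simp [this, x]
      · have := finSuccEquiv_X_succ (R := k) (n := 2) (j := 1)
        simp at this ⊢
        simp [this, y]
    rw [this]
    simpa using hfe
end S18

namespace S18

lemma eval_smul_hom {k σ : Type*} [CommRing k] {n : ℕ} {H : MvPolynomial σ k}
    (hH : H.IsHomogeneous n) (c : k) (P : σ → k) :
    eval (fun i => c * P i) H = c ^ n * eval P H := by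
  classical
  rw [eval_eq, eval_eq, Finset.mul_sum]
  refine Finset.sum_congr rfl fun m hm => ?_
  have := hH (mem_support_iff.1 hm)
  rw [Finsupp.weight_apply] at this
  simp only [Pi.one_apply, smul_eq_mul, mul_one] at this
  rw [Finsupp.sum] at this
  simp only [mul_pow, Finset.prod_mul_distrib]
  rw [Finset.prod_pow_eq_pow_sum, this]; ring

theorem exists_pt {k : Type*} [Field k] [IsAlgClosed k] {d : ℕ} (hd : 4 ≤ d)
    (F : MvPolynomial (Fin 4) k) (hhom : F.IsHomogeneous d) (hirr : Irreducible F)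
    {n : ℕ} (H : MvPolynomial (Fin 4) k) (hH : H.IsHomogeneous n) (hFH : ¬ F ∣ H) :
    ∃ P : Fin 4 → k, P 0 = 1 ∧ eval P F = 0 ∧ eval P H ≠ 0 := by
  by_contra! hcon
  have hpr : Prime F := hirr.prime
  have hmem : X 0 * H ∈ vanishingIdeal k (zeroLocus k (Ideal.span {F})) := by
    rw [mem_vanishingIdeal_iff]
    intro x hx
    rw [zeroLocus_span] at hx
    have hx' : eval x F = 0 := by
      have := hx F (by simp); simpa [aeval_eq_eval] using this
    show aeval x (X 0 * H) = 0
    rw [map_mul, aeval_X]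
    by_cases h0 : x 0 = 0
    · rw [h0, zero_mul]
    have h1 := hcon (fun i => (x 0)⁻¹ * x i) (by simp [h0])
      (by rw [eval_smul_hom hhom, hx', mul_zero])
    rw [eval_smul_hom hH] at h1
    have : eval x H = 0 := by
      rcases mul_eq_zero.1 h1 with h | h
      · exact absurd h (pow_ne_zero _ (inv_ne_zero h0))
      · exact h
    have h2 : aeval x H = 0 := by simpa [aeval_eq_eval] using this
    rw [h2, mul_zero]
  rw [vanishingIdeal_zeroLocus_eq_radical] at hmem
  obtain ⟨m, hm⟩ := hmem
  rw [Ideal.mem_span_singleton] at hm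
  rcases hpr.dvd_or_dvd (hpr.dvd_of_dvd_pow hm) with h | h
  · have h1 : F.totalDegree ≤ (X 0 : MvPolynomial (Fin 4) k).totalDegree :=
      totalDegree_le_of_dvd_of_isDomain h (X_ne_zero 0)
    rw [hhom.totalDegree hirr.ne_zero, totalDegree_X] at h1
    omega
  · exact hFH h

abbrev Ix {k : Type*} [Field k] (F : MvPolynomial (Fin 4) k) :=
  {P : Fin 4 → k // P 0 = 1 ∧ eval P F = 0}

theorem exists_ultra {k : Type*} [Field k] [IsAlgClosed k] {d : ℕ} (hd : 4 ≤ d)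
    (F : MvPolynomial (Fin 4) k) (hhom : F.IsHomogeneous d) (hirr : Irreducible F) :
    ∃ 𝒰 : Ultrafilter (Ix F), ∀ n (H : MvPolynomial (Fin 4) k), H.IsHomogeneous n →
      ¬ F ∣ H → ∀ᶠ P in (𝒰 : Filter (Ix F)), eval P.1 H ≠ 0 := by
  have hpr : Prime F := hirr.prime
  let f : Filter (Ix F) :=
    { sets := {s | ∃ n, ∃ H : MvPolynomial (Fin 4) k, H.IsHomogeneous n ∧ ¬ F ∣ H ∧
        {P : Ix F | eval P.1 H ≠ 0} ⊆ s}
      univ_sets := ⟨0, 1, isHomogeneous_one _ _, fun h => hirr.not_isUnit (isUnit_of_dvd_one h),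
        Set.subset_univ _⟩
      sets_of_superset := by
        rintro s t ⟨n, H, h1, h2, h3⟩ hst
        exact ⟨n, H, h1, h2, h3.trans hst⟩
      inter_sets := by
        rintro s t ⟨n, H, h1, h2, h3⟩ ⟨n', H', h1', h2', h3'⟩
        refine ⟨n + n', H * H', h1.mul h1', fun h => ?_, ?_⟩
        · rcases hpr.dvd_or_dvd h with h | h
          exacts [h2 h, h2' h]
        · intro P hP
          simp only [Set.mem_setOf_eq, map_mul] at hP
          exact ⟨h3 (left_ne_zero_of_mul hP), h3' (right_ne_zero_of_mul hP)⟩ }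
  have hf : f.NeBot := by
    constructor
    intro hb
    have : (∅ : Set (Ix F)) ∈ f := by rw [hb]; trivial
    obtain ⟨n, H, h1, h2, h3⟩ := this
    obtain ⟨P, a, b, c⟩ := exists_pt hd F hhom hirr H h1 h2
    exact h3 (show (⟨P, a, b⟩ : Ix F) ∈ _ from c)
  refine ⟨Ultrafilter.of f, fun n H h1 h2 => ?_⟩
  exact Ultrafilter.of_le f ⟨n, H, h1, h2, subset_rfl⟩

universe uu vv
theorem omega {k : Type uu} [Field k] [IsAlgClosed k] {I : Type vv} (𝒰 : Ultrafilter I) :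
    ∃ (Ω : Type (max vv uu)) (_ : Field Ω) (_ : Algebra k Ω) (_ : IsAlgClosed Ω) (π : (I → k) →ₐ[k] Ω),
      Function.Surjective π ∧ ∀ r, π r = 0 ↔ ∀ᶠ P in (𝒰 : Filter I), r P = 0 := by
  let Ω := Filter.Germ (𝒰 : Filter I) k
  let p : (I → k) →+* Ω := Filter.Germ.coeRingHom (𝒰 : Filter I)
  have hp : Function.Surjective p := fun g => by
    induction g using Filter.Germ.inductionOn with
    | _ f => exact ⟨f, rfl⟩
  have hp0 : ∀ r, p r = 0 ↔ ∀ᶠ P in (𝒰 : Filter I), r P = 0 := fun r =>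
    Filter.Germ.coe_eq
  letI : Algebra k Ω := (p.comp (Pi.constRingHom I k)).toAlgebra
  have hac : IsAlgClosed Ω := by
    apply IsAlgClosed.of_exists_root
    intro q hq hirr
    classical
    choose g hg using hp
    let Q : I → Polynomial k := fun P =>
      Polynomial.X ^ q.natDegree + ∑ i ∈ Finset.range q.natDegree,
        Polynomial.C (g (q.coeff i) P) * Polynomial.X ^ i
    have hroot : ∀ P, ∃ a, (Q P).eval a = 0 := fun P => by
      apply IsAlgClosed.exists_root
      have hn : 0 < q.natDegree := hirr.natDegree_pos
      have : (Q P).degree = q.natDegree := by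
        apply Polynomial.degree_eq_of_le_of_coeff_ne_zero
        · apply (Polynomial.degree_add_le _ _).trans
          simp only [Polynomial.degree_X_pow, sup_le_iff, le_refl, true_and]
          apply (Polynomial.degree_sum_le _ _).trans
          apply Finset.sup_le
          intro i hi
          apply (Polynomial.degree_C_mul_X_pow_le _ _).trans
          exact_mod_cast (Finset.mem_range.1 hi).le
        · have : (Q P).coeff q.natDegree = 1 := by
            simp [Q, Polynomial.coeff_X_pow, Polynomial.finset_sum_coeff]
          rw [this]; exact one_ne_zero
      rw [this]; exact_mod_cast hn.ne'
    choose a ha using hroot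
    refine ⟨p a, ?_⟩
    have h1 : q = Polynomial.X ^ q.natDegree + ∑ i ∈ Finset.range q.natDegree,
        Polynomial.C (q.coeff i) * Polynomial.X ^ i := hq.as_sum
    have h2 : Polynomial.eval (p a) q = p (a ^ q.natDegree + ∑ i ∈ Finset.range q.natDegree,
        g (q.coeff i) * a ^ i) := by
      conv_lhs => rw [h1]
      simp [Polynomial.eval_finset_sum, map_sum, hg]
    rw [h2, hp0]
    refine Filter.Eventually.of_forall fun P => ?_
    have := ha P
    simpa [Q, Polynomial.eval_finset_sum] using this
  refine ⟨Ω, inferInstance, inferInstance, hac, ⟨p, fun r => rfl⟩, hp, hp0⟩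

noncomputable def hmg {k σ : Type*} [CommRing k] (N : ℕ) (e : σ → Fin 4) (h : MvPolynomial σ k) :
    MvPolynomial (Fin 4) k :=
  ∑ n ∈ Finset.range (N+1), X 0 ^ (N - n) * rename e (homogeneousComponent n h)

lemma hmg_hom {k σ : Type*} [CommRing k] (N : ℕ) (e : σ → Fin 4) (h : MvPolynomial σ k) :
    (hmg N e h).IsHomogeneous N := by
  apply IsHomogeneous.sum
  intro n hn
  have h1 := ((isHomogeneous_X k (0 : Fin 4)).pow (N - n)).mul
    ((homogeneousComponent_isHomogeneous n h).rename_isHomogeneous (f := e))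
  rw [Finset.mem_range] at hn
  have : 1 * (N - n) + n = N := by omega
  rwa [this] at h1

lemma eval_hmg {k A σ : Type*} [CommRing k] [CommRing A] [Algebra k A]
    {N : ℕ} (e : σ → Fin 4) {h : MvPolynomial σ k}
    (hN : h.totalDegree ≤ N) (P : Fin 4 → A) (hP : P 0 = 1) :
    aeval P (hmg N e h) = aeval (P ∘ e) h := by
  have h1 : ∑ n ∈ Finset.range (N+1), homogeneousComponent n h = h := by
    conv_rhs => rw [← sum_homogeneousComponent h]
    symm
    apply Finset.sum_subset
    · intro n hn; simp only [Finset.mem_range] at *; omega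
    · intro n hn hn'
      simp only [Finset.mem_range] at *
      exact homogeneousComponent_eq_zero _ _ (by omega)
  conv_rhs => rw [← h1]
  simp [hmg, map_sum, hP, aeval_rename]

lemma hmg_ne {k σ : Type*} [CommRing k] {N : ℕ} (e : σ → Fin 4)
    (he : Function.Injective e) (he0 : ∀ i, e i ≠ 0) {h : MvPolynomial σ k}
    (hN : h.totalDegree ≤ N) (hh : h ≠ 0) : hmg N e h ≠ 0 := by
  intro h0
  have := eval_hmg (A := MvPolynomial (Fin 4) k) e hN (Function.update X 0 1) (by simp)
  rw [h0, map_zero] at this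
  have h2 : (Function.update X 0 1 : Fin 4 → MvPolynomial (Fin 4) k) ∘ e = X ∘ e := by
    funext i; simp [he0 i]
  rw [h2] at this
  have h3 : rename e h = 0 := by
    rw [this, rename_eq_aeval]
  exact hh (rename_injective e he (by rw [h3, map_zero]))

lemma ndvd_low {k : Type*} [Field k] {d n : ℕ} {F H : MvPolynomial (Fin 4) k}
    (hhom : F.IsHomogeneous d) (hF : F ≠ 0) (hH : H.IsHomogeneous n) (hn : n < d) (h0 : H ≠ 0) :
    ¬ F ∣ H := by
  intro h
  have := totalDegree_le_of_dvd_of_isDomain h h0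
  rw [hhom.totalDegree hF, hH.totalDegree h0] at this
  omega

lemma degreeOf_dvd {k : Type*} [Field k] {F H : MvPolynomial (Fin 4) k}
    (h0 : H ≠ 0) (h : F ∣ H) (i : Fin 4) : F.degreeOf i ≤ H.degreeOf i := by
  obtain ⟨G, rfl⟩ := h
  rw [degreeOf_mul_eq (left_ne_zero_of_mul h0) (right_ne_zero_of_mul h0)]
  omega

lemma degreeOf_ne {k : Type*} [Field k] {F : MvPolynomial (Fin 4) k} {i : Fin 4}
    (h : pderiv i F ≠ 0) : F.degreeOf i ≠ 0 := by
  intro h0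
  apply h
  apply pderiv_eq_zero_of_notMem_vars
  intro hi
  exact mem_vars_iff_degreeOf_ne_zero.1 hi h0

lemma hmg_deg {k : Type*} [Field k] (N : ℕ) (h : MvPolynomial (Fin 2) k) :
    (hmg N ![1,2] h).degreeOf 3 = 0 := by
  rw [← Nat.le_zero]
  apply (degreeOf_sum_le _ _ _).trans
  apply Finset.sup_le
  intro n hn
  apply (degreeOf_mul_le _ _ _).trans
  have h1 : degreeOf 3 ((X 0 : MvPolynomial (Fin 4) k) ^ (N - n)) = 0 :=
    degreeOf_X_pow_of_ne _ (by decide)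
  have h2 : degreeOf 3 (rename (![1,2] : Fin 2 → Fin 4) (homogeneousComponent n h)) = 0 := by
    by_contra h3
    obtain ⟨i, _, hi⟩ := mem_vars_rename _ _ (mem_vars_iff_degreeOf_ne_zero.2 h3)
    fin_cases i <;> simp at hi
  omega

/-- The generic point package. -/
theorem generic {k : Type uu} [Field k] [IsAlgClosed k] {d : ℕ} (hd : 4 ≤ d)
    (F : MvPolynomial (Fin 4) k) (hhom : F.IsHomogeneous d) (hirr : Irreducible F)
    (h3 : pderiv 3 F ≠ 0) :
    ∃ (𝒰 : Ultrafilter (Ix F)) (Ω : Type uu) (_ : Field Ω) (_ : Algebra k Ω)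
      (_ : IsAlgClosed Ω) (π : (Ix F → k) →ₐ[k] Ω),
      Function.Surjective π ∧ (∀ r, π r = 0 ↔ ∀ᶠ P in (𝒰 : Filter (Ix F)), r P = 0) ∧
      (∀ᶠ P in (𝒰 : Filter (Ix F)), eval P.1 (pderiv 3 F) ≠ 0) ∧
      (∀ l : Fin 4 → k, l ≠ 0 → ∀ᶠ P in (𝒰 : Filter (Ix F)), l ⬝ᵥ P.1 ≠ 0) ∧
      (∀ h : MvPolynomial (Fin 2) k,
        aeval ![π (fun P => P.1 1), π (fun P => P.1 2)] h = 0 → h = 0) ∧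
      (∀ h : MvPolynomial (Fin 3) k, h ≠ 0 → h.totalDegree ≤ 3 →
        aeval ![π (fun P => P.1 1), π (fun P => P.1 2), π (fun P => P.1 3)] h ≠ 0) := by
  obtain ⟨𝒰, h𝒰⟩ := exists_ultra hd F hhom hirr
  obtain ⟨Ω, i1, i2, i3, π, hs, hπ⟩ := omega (k := k) 𝒰
  refine ⟨𝒰, Ω, i1, i2, i3, π, hs, hπ, ?_, ?_, ?_, ?_⟩
  · exact h𝒰 (d-1) _ (hhom.pderiv) (ndvd_low hhom hirr.ne_zero hhom.pderiv (by omega) h3)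
  · intro l hl
    have hh : (∑ i, C (l i) * X i : MvPolynomial (Fin 4) k).IsHomogeneous 1 := by
      apply IsHomogeneous.sum
      intro i _
      simpa using (isHomogeneous_C (Fin 4) (l i)).mul (isHomogeneous_X k i)
    have hne : (∑ i, C (l i) * X i : MvPolynomial (Fin 4) k) ≠ 0 := by
      intro h0
      apply hl
      funext i
      have := congrArg (fun q => eval (Pi.single i 1) q) h0
      simpa [map_sum, Pi.single_apply] using this
    filter_upwards [h𝒰 1 _ hh (ndvd_low hhom hirr.ne_zero hh (by omega) hne)] with P hP
    simpa [map_sum, dotProduct] using hP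
  · intro h hh
    by_contra hne
    have hH := hmg_ne (N := h.totalDegree) (![1,2] : Fin 2 → Fin 4)
      (by decide) (by decide) le_rfl hne
    have hnd : ¬ F ∣ hmg h.totalDegree (![1,2] : Fin 2 → Fin 4) h := fun hdv => by
      have := degreeOf_dvd hH hdv 3
      rw [hmg_deg] at this
      exact degreeOf_ne h3 (by omega)
    have h1 := h𝒰 _ _ (hmg_hom _ _ _) hnd
    have h2 : ![π (fun P => P.1 1), π (fun P => P.1 2)] = fun i => π (fun P : Ix F => P.1 ((![1,2] : Fin 2 → Fin 4) i)) := by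
      funext i; fin_cases i <;> rfl
    rw [h2] at hh
    have h4 : π (aeval (fun (i : Fin 2) (P : Ix F) => P.1 ((![1,2] : Fin 2 → Fin 4) i)) h) = 0 := by
      rw [← hh, ← comp_aeval_apply]
    rw [hπ] at h4
    obtain ⟨P, ha, hb⟩ := (h1.and h4).exists
    apply ha
    have h5 := eval_hmg (A := k) (![1,2] : Fin 2 → Fin 4) (le_refl h.totalDegree) P.1 P.2.1
    rw [aeval_eq_eval] at h5
    have h6 : (aeval (fun (i : Fin 2) (P : Ix F) => P.1 ((![1,2] : Fin 2 → Fin 4) i)) h) P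
       = aeval (P.1 ∘ (![1,2] : Fin 2 → Fin 4)) h :=
      comp_aeval_apply _ (Pi.evalAlgHom k (fun _ : Ix F => k) P) _
    rw [← h6, hb] at h5
    exact h5
  · intro h hne hdeg hh
    have hH := hmg_ne (N := 3) (![1,2,3] : Fin 3 → Fin 4)
      (by decide) (by decide) hdeg hne
    have h1 := h𝒰 _ _ (hmg_hom _ _ _) (ndvd_low hhom hirr.ne_zero (hmg_hom _ _ _) (by omega) hH)
    have h2 : ![π (fun P => P.1 1), π (fun P => P.1 2), π (fun P => P.1 3)] = fun i => π (fun P : Ix F => P.1 ((![1,2,3] : Fin 3 → Fin 4) i)) := by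
      funext i; fin_cases i <;> rfl
    rw [h2] at hh
    have h4 : π (aeval (fun (i : Fin 3) (P : Ix F) => P.1 ((![1,2,3] : Fin 3 → Fin 4) i)) h) = 0 := by
      rw [← hh, ← comp_aeval_apply]
    rw [hπ] at h4
    obtain ⟨P, ha, hb⟩ := (h1.and h4).exists
    apply ha
    have h5 := eval_hmg (A := k) (![1,2,3] : Fin 3 → Fin 4) hdeg P.1 P.2.1
    rw [aeval_eq_eval] at h5
    have h6 : (aeval (fun (i : Fin 3) (P : Ix F) => P.1 ((![1,2,3] : Fin 3 → Fin 4) i)) h) P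
       = aeval (P.1 ∘ (![1,2,3] : Fin 3 → Fin 4)) h :=
      comp_aeval_apply _ (Pi.evalAlgHom k (fun _ : Ix F => k) P) _
    rw [← h6, hb] at h5
    exact h5
end S18

namespace S18

theorem embed (k : Type*) [Field k] {Ω : Type*} [Field Ω] [Algebra k Ω] [IsAlgClosed Ω]
    (x y : Ω) (h : ∀ h : MvPolynomial (Fin 2) k, aeval ![x, y] h = 0 → h = 0) :
    ∃ ι : AlgebraicClosure (FractionRing (MvPolynomial (Fin 2) k)) →ₐ[k] Ω,
      ι (algebraMap (MvPolynomial (Fin 2) k) _ (X 0)) = x ∧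
      ι (algebraMap (MvPolynomial (Fin 2) k) _ (X 1)) = y := by
  let φ : MvPolynomial (Fin 2) k →ₐ[k] Ω := aeval ![x, y]
  have hφ : Function.Injective φ := (injective_iff_map_eq_zero φ).2 h
  let ψ : FractionRing (MvPolynomial (Fin 2) k) →ₐ[k] Ω := IsFractionRing.liftAlgHom (g := φ) hφ
  letI : Algebra (FractionRing (MvPolynomial (Fin 2) k)) Ω := ψ.toRingHom.toAlgebra
  haveI : IsScalarTower k (FractionRing (MvPolynomial (Fin 2) k)) Ω :=
    IsScalarTower.of_algebraMap_eq fun r => (ψ.commutes r).symm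
  let ι : AlgebraicClosure (FractionRing (MvPolynomial (Fin 2) k)) →ₐ[FractionRing (MvPolynomial (Fin 2) k)] Ω :=
    IsAlgClosed.lift
  have key : ∀ p : MvPolynomial (Fin 2) k, ι (algebraMap (MvPolynomial (Fin 2) k) _ p) = φ p := by
    intro p
    rw [IsScalarTower.algebraMap_apply (MvPolynomial (Fin 2) k) (FractionRing (MvPolynomial (Fin 2) k))
      (AlgebraicClosure (FractionRing (MvPolynomial (Fin 2) k)))]
    rw [AlgHom.commutes]
    show ψ _ = _
    exact IsFractionRing.lift_algebraMap hφ p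
  refine ⟨ι.restrictScalars k, ?_, ?_⟩
  · show ι _ = _
    rw [key]; simp [φ]
  · show ι _ = _
    rw [key]; simp [φ]

theorem zrange {k : Type*} [Field k] {K Ω : Type*} [Field K] [Field Ω] [Algebra k K] [Algebra k Ω]
    [IsAlgClosed K] (ι : K →ₐ[k] Ω) (s t : K) (z : Ω) (F : MvPolynomial (Fin 4) k)
    (h0 : aeval ![1, ι s, ι t, z] F = 0) (h3 : aeval ![1, ι s, ι t, z] (pderiv 3 F) ≠ 0) :
    ∃ ζ, ι ζ = z := by
  letI : Algebra K Ω := ι.toRingHom.toAlgebra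
  let Y : Fin 4 → Polynomial K := ![1, Polynomial.C s, Polynomial.C t, Polynomial.X]
  let g : Polynomial K →ₐ[k] Ω :=
    { Polynomial.eval₂RingHom ι.toRingHom z with
      commutes' := fun r => by
        show Polynomial.eval₂ _ _ (algebraMap k (Polynomial K) r) = _
        rw [Polynomial.algebraMap_apply, Polynomial.eval₂_C]
        exact ι.commutes r }
  have hg : ∀ q, g q = Polynomial.eval₂ ι.toRingHom z q := fun q => rfl
  have hY : (fun i => g (Y i)) = ![1, ι s, ι t, z] := by
    funext i; fin_cases i <;> simp [Y, hg]
  have hq0 : aeval Y F ≠ 0 := by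
    intro hq
    have h1 := chain_rule ((Polynomial.derivative' (R := K)).restrictScalars k) Y F
    rw [hq, map_zero] at h1
    have h2 := congrArg g h1
    simp [Fin.sum_univ_four, Y, Polynomial.derivative'] at h2
    apply h3
    rw [← hY, ← comp_aeval_apply]
    rw [h2]
  have hal : IsAlgebraic K z := ⟨aeval Y F, hq0, by
    have : g (aeval Y F) = 0 := by rw [comp_aeval_apply, hY, h0]
    rw [hg] at this
    exact this⟩
  have hint := hal.isIntegral
  have hdeg := IsAlgClosed.degree_eq_one_of_irreducible K (minpoly.irreducible hint)
  obtain ⟨ζ, hζ⟩ := minpoly.mem_range_of_degree_eq_one K z hdeg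
  exact ⟨ζ, hζ⟩

lemma exists_lift_map {A B : Type*} [CommRing A] [CommRing B] (f : A →+* B)
    (p : MvPolynomial (Fin 2) B) (h : ∀ m ∈ p.support, ∃ a, f a = coeff m p) :
    ∃ q : MvPolynomial (Fin 2) A, map f q = p := by
  classical
  choose! a ha using h
  refine ⟨∑ m ∈ p.support, monomial m (a m), ?_⟩
  rw [map_sum]
  conv_rhs => rw [p.as_sum]
  refine Finset.sum_congr rfl fun m hm => ?_
  rw [map_monomial, ha m hm]

theorem descend {K Ω : Type*} [Field K] [IsAlgClosed K] [Field Ω] [Algebra K Ω]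
    (p : MvPolynomial (Fin 2) K) (c g : MvPolynomial (Fin 2) Ω)
    (hcg : c * g = map (algebraMap K Ω) p) (hc : c.totalDegree ≤ 3) (hc0 : constantCoeff c = 0)
    (hc1 : ∀ j, constantCoeff (pderiv j c) = 0) :
    ∃ c g : MvPolynomial (Fin 2) K, c * g = p ∧ c.totalDegree ≤ 3 ∧ constantCoeff c = 0 ∧
      ∀ j, constantCoeff (pderiv j c) = 0 := by
  classical
  let S : Finset Ω := c.support.image (fun m => coeff m c) ∪ g.support.image (fun m => coeff m g)
  let B := Algebra.adjoin K (S : Set Ω)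
  haveI : Algebra.FiniteType K B := by
    have := (Subalgebra.fg_adjoin_finset (R := K) S)
    exact Subalgebra.fg_iff_finiteType _ |>.1 this
  obtain ⟨M, hM⟩ := Ideal.exists_maximal B
  letI : Field (B ⧸ M) := Ideal.Quotient.field M
  haveI : Algebra.FiniteType K (B ⧸ M) :=
    Algebra.FiniteType.of_surjective (Ideal.Quotient.mkₐ K M) (Ideal.Quotient.mkₐ_surjective K M)
  haveI : Module.Finite K (B ⧸ M) := finite_of_finite_type_of_isJacobsonRing K (B ⧸ M)
  have hbij : Function.Bijective (algebraMap K (B ⧸ M)) :=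
    IsAlgClosed.algebraMap_bijective_of_isIntegral
  let e : K ≃ₐ[K] (B ⧸ M) := AlgEquiv.ofBijective (Algebra.ofId K (B ⧸ M)) hbij
  let θ : B →ₐ[K] K := e.symm.toAlgHom.comp (Ideal.Quotient.mkₐ K M)
  let f : B →+* Ω := algebraMap B Ω
  have hf : Function.Injective f := Subtype.val_injective
  obtain ⟨c', hc'⟩ := exists_lift_map f c (fun m hm =>
    ⟨⟨coeff m c, Algebra.subset_adjoin (by
      simp only [S, Finset.coe_union, Finset.coe_image]
      exact Or.inl ⟨m, hm, rfl⟩)⟩, rfl⟩)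
  obtain ⟨g', hg'⟩ := exists_lift_map f g (fun m hm =>
    ⟨⟨coeff m g, Algebra.subset_adjoin (by
      simp only [S, Finset.coe_union, Finset.coe_image]
      exact Or.inr ⟨m, hm, rfl⟩)⟩, rfl⟩)
  have h1 : c' * g' = map (algebraMap K B) p := by
    apply map_injective f hf
    rw [map_mul, hc', hg', hcg, map_map]
    rfl
  refine ⟨map θ.toRingHom c', map θ.toRingHom g', ?_, ?_, ?_, ?_⟩
  · rw [← map_mul, h1, map_map]
    have : (θ.toRingHom.comp (algebraMap K B)) = RingHom.id K := by
      ext a; exact θ.commutes a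
    rw [this, map_id]; 
  · refine (Finset.sup_mono (support_map_subset _ _)).trans ?_
    show c'.totalDegree ≤ 3
    have hs : (map f c').support = c'.support := support_map_of_injective _ hf
    rw [hc'] at hs
    unfold totalDegree at hc ⊢
    rw [← hs]; exact hc
  · rw [constantCoeff_map]
    have : f (constantCoeff c') = 0 := by rw [← constantCoeff_map, hc', hc0]
    rw [(map_eq_zero_iff f hf).1 this, map_zero]
  · intro j
    rw [pderiv_map, constantCoeff_map]
    have : f (constantCoeff (pderiv j c')) = 0 := by rw [← constantCoeff_map, ← pderiv_map, hc', hc1]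
    rw [(map_eq_zero_iff f hf).1 this, map_zero]

section lift
variable {k : Type*} [Field k] {I : Type*} 

noncomputable def lftp (N : ℕ) (c : I → MvPolynomial (Fin 2) k) : MvPolynomial (Fin 2) (I → k) :=
  ∑ m ∈ ((Finset.range (N+1)) ×ˢ (Finset.range (N+1))).filter (fun m => m.1 + m.2 ≤ N), 
    monomial (Finsupp.equivFunOnFinite.symm ![m.1, m.2]) (fun P => coeff (Finsupp.equivFunOnFinite.symm ![m.1, m.2]) (c P))

lemma map_lftp {N : ℕ} (c : I → MvPolynomial (Fin 2) k) (P : I) (h : (c P).totalDegree ≤ N) :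
    map (Pi.evalRingHom (fun _ => k) P) (lftp N c) = c P := by
  classical
  ext m
  rw [coeff_map]
  simp only [lftp, coeff_sum, coeff_monomial]
  by_cases hm : m 0 + m 1 ≤ N
  · have hme : m = Finsupp.equivFunOnFinite.symm ![m 0, m 1] := by
      ext i; fin_cases i <;> rfl
    rw [Finset.sum_eq_single (m 0, m 1)]
    · simp [← hme]
    · intro b hb hne
      rw [if_neg]
      intro h; apply hne; rw [← h]; simp
    · intro h; exfalso; apply h; simp; omega
  · rw [Finset.sum_eq_zero]
    · rw [map_zero]; symm
      apply coeff_eq_zero_of_totalDegree_lt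
      have : ∑ i ∈ m.support, m i = m 0 + m 1 := by
        have := Finsupp.sum_fintype m (fun _ a => a) (by simp)
        rw [Finsupp.sum] at this; rw [this, Fin.sum_univ_two]
      omega
    · intro b hb
      rw [if_neg]
      intro h; apply hm; rw [← h]
      simp at hb ⊢; omega

lemma totalDegree_lftp (N : ℕ) (c : I → MvPolynomial (Fin 2) k) : (lftp N c).totalDegree ≤ N := by
  apply (totalDegree_finset_sum _ _).trans
  apply Finset.sup_le
  intro m hm
  apply (totalDegree_monomial_le _ _).trans
  rw [Finsupp.sum_fintype _ _ (by simp)]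
  simp at hm ⊢; omega

variable {Ω : Type*} [Field Ω] {𝒰 : Ultrafilter I}
lemma map_eq_of_ev (π : (I → k) →+* Ω)
    (hπ : ∀ r, π r = 0 ↔ ∀ᶠ P in (𝒰 : Filter I), r P = 0) (p q : MvPolynomial (Fin 2) (I → k))
    (h : ∀ᶠ P in (𝒰 : Filter I), map (Pi.evalRingHom (fun _ => k) P) p = map (Pi.evalRingHom (fun _ => k) P) q) :
    map π p = map π q := by
  ext m
  rw [coeff_map, coeff_map, ← sub_eq_zero, ← map_sub, hπ]
  filter_upwards [h] with P hP
  have := congrArg (coeff m) hP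
  rw [coeff_map, coeff_map] at this
  simpa [sub_eq_zero] using this

lemma ev_of_map_eq (π : (I → k) →+* Ω)
    (hπ : ∀ r, π r = 0 ↔ ∀ᶠ P in (𝒰 : Filter I), r P = 0) (p : Polynomial (I → k)) (h : p.map π = 0) :
    ∀ᶠ P in (𝒰 : Filter I), p.map (Pi.evalRingHom (fun _ => k) P) = 0 := by
  have : ∀ᶠ P in (𝒰 : Filter I), ∀ n ∈ p.support, p.coeff n P = 0 := by
    rw [Filter.eventually_all_finset]
    intro n hn
    rw [← hπ, ← Polynomial.coeff_map, h, Polynomial.coeff_zero]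
  filter_upwards [this] with P hP
  ext n
  rw [Polynomial.coeff_map, Polynomial.coeff_zero]
  by_cases hn : n ∈ p.support
  · exact hP n hn
  · rw [Polynomial.notMem_support_iff.1 hn, map_zero]

end lift
end S18

namespace S18

lemma tp_totalDegree {k : Type*} [Field k] {A : Type*} [CommRing A] [Algebra k A] (F : MvPolynomial (Fin 4) k)
    (x y z u v : A) : (tp F x y z u v).totalDegree ≤ F.totalDegree := by
  have h1 : tp F x y z u v = aeval ![1, C x + X 0, C y + X 1, C z + C u * X 0 + C v * X 1]
      (map (algebraMap k A) F) := by
    rw [aeval_map_algebraMap]; rfl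
  rw [h1]
  have hX : ∀ i : Fin 2, (X i : MvPolynomial (Fin 2) A).totalDegree ≤ 1 := fun i =>
    (totalDegree_monomial_le _ _).trans (by simp)
  have hCX : ∀ (a : A) (i : Fin 2), (C a * X i : MvPolynomial (Fin 2) A).totalDegree ≤ 1 := fun a i =>
    (totalDegree_mul _ _).trans (by rw [totalDegree_C]; have := hX i; omega)
  refine (totalDegree_aeval_le _ (fun i => ?_) _).trans (Finset.sup_mono (support_map_subset _ _))
  fin_cases i
  · simp
  · exact (totalDegree_add _ _).trans (max_le (by simp) (hX 0))
  · exact (totalDegree_add _ _).trans (max_le (by simp) (hX 1))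
  · exact (totalDegree_add _ _).trans (max_le ((totalDegree_add _ _).trans
      (max_le (by simp) (hCX _ 0))) (hCX _ 1))

def Bad1 {k : Type*} [Field k] (F : MvPolynomial (Fin 4) k) (x y z u v : k) : Prop :=
  ∀ i j, constantCoeff (pderiv i (pderiv j (tp F x y z u v))) = 0
def Bad2 {k : Type*} [Field k] (F : MvPolynomial (Fin 4) k) (x y z u v : k) : Prop :=
  ∃ c g : MvPolynomial (Fin 2) k, c * g = tp F x y z u v ∧ c.totalDegree ≤ 3 ∧
    constantCoeff c = 0 ∧ ∀ j, constantCoeff (pderiv j c) = 0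

universe uu
theorem mainAux {k : Type uu} [Field k] [IsAlgClosed k] [CharZero k] {d : ℕ} (hd : 4 ≤ d)
    (F : MvPolynomial (Fin 4) k) (hhom : F.IsHomogeneous d) (hirr : Irreducible F)
    (h3 : pderiv 3 F ≠ 0) (Λ : Finset (Fin 4 → k)) (hΛ0 : ∀ l ∈ Λ, l ≠ 0)
    (hΛ : ∀ P w : Fin 4 → k, P 0 = 1 → w 0 = 0 → w ≠ 0 →
      (∀ τ : k, eval (fun i => P i + τ * w i) F = 0) → ∃ l ∈ Λ, l ⬝ᵥ P = 0) :
    ∃ P : Fin 4 → k, P 0 = 1 ∧ eval P F = 0 ∧ eval P (pderiv 3 F) ≠ 0 ∧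
      (∀ l ∈ Λ, l ⬝ᵥ P ≠ 0) ∧ ∀ u v : k, eval P (pderiv 1 F) + u * eval P (pderiv 3 F) = 0 →
        eval P (pderiv 2 F) + v * eval P (pderiv 3 F) = 0 →
        ¬ Bad1 F (P 1) (P 2) (P 3) u v ∧ ¬ Bad2 F (P 1) (P 2) (P 3) u v := by
  classical
  obtain ⟨𝒰, Ω, i1, i2, i3, π, hs, hπ, hg3, hgl, hg2, hgen⟩ := generic hd F hhom hirr h3
  have hne : ∀ r, (∀ᶠ P in (𝒰 : Filter (Ix F)), r P ≠ 0) → π r ≠ 0 := by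
    intro r hr h0
    obtain ⟨P, a, b⟩ := (hr.and ((hπ r).1 h0)).exists
    exact a b
  have hvalΩ : ∀ G : MvPolynomial (Fin 4) k,
      aeval ![1, π (fun P => P.1 1), π (fun P => P.1 2), π (fun P => P.1 3)] G
        = π (fun P => eval P.1 G) := by
    intro G
    have e1 : ![1, π (fun P => P.1 1), π (fun P => P.1 2), π (fun P => P.1 3)] =
      fun i => π (fun P : Ix F => P.1 i) := by
      funext i
      fin_cases i
      · show 1 = π _
        rw [← map_one π]; congr 1; funext P; exact P.2.1.symm
      all_goals rfl
    rw [e1, ← comp_aeval_apply]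
    congr 1
    funext P
    have := comp_aeval_apply (fun i (P : Ix F) => P.1 i) (Pi.evalAlgHom k (fun _ : Ix F => k) P) G
    rw [← aeval_eq_eval]
    exact this
  obtain ⟨K, _, _, _, _, ι, s, t, D, E, hιs, hιt, hDE, hDx, hEx, hDy, hEy, hconst⟩ :
      ∃ (K : Type uu) (_ : Field K) (_ : Algebra k K) (_ : IsAlgClosed K) (_ : CharZero K)
        (ι : K →ₐ[k] Ω) (s t : K) (D E : Derivation k K K),
        ι s = π (fun P => P.1 1) ∧ ι t = π (fun P => P.1 2) ∧
        (∀ a, D (E a) = E (D a)) ∧ D s = 1 ∧ E s = 0 ∧ D t = 0 ∧ E t = 1 ∧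
          ∀ e, D e = 0 → E e = 0 → ∃ a : k, algebraMap k K a = e := by
    obtain ⟨ι, hιs, hιt⟩ := embed k (π (fun P => P.1 1)) (π (fun P => P.1 2)) hg2
    obtain ⟨hcz, D, E, hDE, hDx, hEx, hDy, hEy, hconst⟩ := fieldK k
    exact ⟨_, inferInstance, inferInstance, inferInstance, hcz, ι, _, _, D, E, hιs, hιt,
      hDE, hDx, hEx, hDy, hEy, hconst⟩
  have hιi : Function.Injective ι := ι.toRingHom.injective
  have hFΩ := hvalΩ F
  rw [show (fun P : Ix F => eval P.1 F) = 0 from funext fun P => P.2.2, map_zero] at hFΩ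
  have hF3Ω := hne _ hg3
  obtain ⟨ζ, hζ⟩ := zrange ι s t (π (fun P => P.1 3)) F (by rw [hιs, hιt]; exact hFΩ)
    (by rw [hιs, hιt, hvalΩ]; exact hF3Ω)
  have hval : ∀ G : MvPolynomial (Fin 4) k, ι (aeval ![1, s, t, ζ] G) = π (fun P => eval P.1 G) := by
    intro G
    rw [← hvalΩ, comp_aeval_apply]
    congr 2
    funext i; fin_cases i <;> simp [hιs, hιt, hζ]
  have hP0 : aeval ![1, s, t, ζ] F = 0 := by
    apply hιi; rw [hval, map_zero, ← hvalΩ]; exact hFΩ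
  have hP3 : aeval ![1, s, t, ζ] (pderiv 3 F) ≠ 0 := by
    intro h; apply hF3Ω; rw [← hval, h, map_zero]
  have hΛe : ∀ᶠ P in (𝒰 : Filter (Ix F)), ∀ l ∈ Λ, l ⬝ᵥ P.1 ≠ 0 := by
    rw [Filter.eventually_all_finset]
    exact fun l hl => hgl l (hΛ0 l hl)
  have hnl : ∀ w : Fin 4 → K, w 0 = 0 → w ≠ 0 →
      ∃ τ : K, aeval (fun i => ![1, s, t, ζ] i + τ * w i) F ≠ 0 := by
    intro w hw0 hw
    by_contra! hcon
    choose ω hω using fun i => hs (ι (w i))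
    obtain ⟨j, hj⟩ := Function.ne_iff.1 hw
    have hωj : ∀ᶠ P in (𝒰 : Filter (Ix F)), ω j P ≠ 0 := by
      rw [Ultrafilter.eventually_not, ← hπ, hω]
      intro h; apply hj; apply hιi; rw [h]; simp
    have hω0 : ∀ᶠ P in (𝒰 : Filter (Ix F)), ω 0 P = 0 := by
      rw [← hπ, hω, hw0, map_zero]
    let fK : Polynomial K := aeval (fun i => Polynomial.C (![1, s, t, ζ] i) + Polynomial.X * Polynomial.C (w i)) F
    let fR : Polynomial (Ix F → k) := aeval (fun i => Polynomial.C (fun P => P.1 i) + Polynomial.X * Polynomial.C (ω i)) F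
    have hfK : fK = 0 := by
      apply Polynomial.funext
      intro τ
      have := rh_aeval (k := k) (Polynomial.evalRingHom τ) (fun a => by
        rw [Polynomial.algebraMap_apply]; simp)
        (fun i => Polynomial.C (![1, s, t, ζ] i) + Polynomial.X * Polynomial.C (w i)) F
      rw [Polynomial.coe_evalRingHom] at this
      show Polynomial.eval τ (aeval _ F) = _
      rw [this, Polynomial.eval_zero, ← hcon τ]
      congr 2
      funext i
      simp
      exact mul_comm _ _
    have hf : fR.map π.toRingHom = fK.map ι.toRingHom := by
      have e1 := rh_aeval (k := k) (Polynomial.mapRingHom π.toRingHom) (fun a => by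
        rw [Polynomial.algebraMap_apply, Polynomial.algebraMap_apply]; simp)
        (fun i => Polynomial.C (fun P => P.1 i) + Polynomial.X * Polynomial.C (ω i)) F
      have e2 := rh_aeval (k := k) (Polynomial.mapRingHom ι.toRingHom) (fun a => by
        rw [Polynomial.algebraMap_apply, Polynomial.algebraMap_apply]; simp)
        (fun i => Polynomial.C (![1, s, t, ζ] i) + Polynomial.X * Polynomial.C (w i)) F
      rw [Polynomial.coe_mapRingHom] at e1 e2
      show Polynomial.map _ (aeval _ F) = Polynomial.map _ (aeval _ F)
      rw [e1, e2]
      congr 2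
      funext i
      have h1 : π (fun P => P.1 i) = ι (![1, s, t, ζ] i) := by
        fin_cases i
        · show π _ = ι 1
          rw [map_one, ← map_one π]; congr 1; funext P; exact P.2.1
        · exact hιs.symm
        · exact hιt.symm
        · exact hζ.symm
      simp [h1, hω]
    rw [hfK, Polynomial.map_zero] at hf
    have hev := ev_of_map_eq (𝒰 := 𝒰) π.toRingHom hπ fR hf
    obtain ⟨P, ⟨⟨hev, hωj⟩, hω0⟩, hl⟩ := (((hev.and hωj).and hω0).and hΛe).exists
    obtain ⟨l, hl1, hl2⟩ := hΛ P.1 (fun i => ω i P) P.2.1 hω0 (fun h => hωj (congrFun h j)) (by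
      intro τ
      have e1 := rh_aeval (k := k) ((Polynomial.evalRingHom τ).comp (Polynomial.mapRingHom (Pi.evalRingHom (fun _ : Ix F => k) P))) (fun a => by
        rw [Polynomial.algebraMap_apply]; simp)
        (fun i => Polynomial.C (fun P => P.1 i) + Polynomial.X * Polynomial.C (ω i)) F
      have e2 : ((Polynomial.evalRingHom τ).comp (Polynomial.mapRingHom (Pi.evalRingHom (fun _ : Ix F => k) P))) fR = 0 := by
        rw [RingHom.comp_apply, Polynomial.coe_mapRingHom, hev, map_zero]
      have e3 := e1.symm.trans e2
      refine Eq.trans ?_ e3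
      rw [← aeval_eq_eval]
      show aeval _ F = _
      congr 2
      funext i
      simp
      try exact mul_comm _ _)
    exact hl l hl1 hl2
  obtain ⟨u, v, hu, hv, hb1, hb2⟩ := geom D E hDE hconst hDx hEx hDy hEy F hP0 hP3 hnl (by
    intro G hG hGd h
    apply hgen G hG hGd
    rw [← map_zero ι, ← h, comp_aeval_apply]
    congr 2
    funext i; fin_cases i <;> simp [hιs, hιt, hζ])
  by_contra hbad
  let uR : Ix F → k := fun P => - eval P.1 (pderiv 1 F) / eval P.1 (pderiv 3 F)
  let vR : Ix F → k := fun P => - eval P.1 (pderiv 2 F) / eval P.1 (pderiv 3 F)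
  have hbad' : ∀ᶠ P in (𝒰 : Filter (Ix F)),
      Bad1 F (P.1 1) (P.1 2) (P.1 3) (uR P) (vR P) ∨ Bad2 F (P.1 1) (P.1 2) (P.1 3) (uR P) (vR P) := by
    filter_upwards [hg3, hΛe] with P a b
    by_contra hcon
    push Not at hcon
    apply hbad
    refine ⟨P.1, P.2.1, P.2.2, a, b, fun u' v' hu' hv' => ?_⟩
    have e1 : u' = uR P := by
      simp only [uR]; rw [eq_div_iff a]; linear_combination hu'
    have e2 : v' = vR P := by
      simp only [vR]; rw [eq_div_iff a]; linear_combination hv'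
    rw [e1, e2]
    exact hcon
  have hιu : ι u = π uR := by
    apply mul_right_cancel₀ hF3Ω
    rw [← map_mul π, ← hval, ← map_mul]
    have : u * aeval ![1, s, t, ζ] (pderiv 3 F) = - aeval ![1, s, t, ζ] (pderiv 1 F) := by
      linear_combination hu
    rw [this, map_neg, hval, ← map_neg, ← sub_eq_zero, ← map_sub, hπ]
    filter_upwards [hg3] with P a
    simp [uR, a]
  have hιv : ι v = π vR := by
    apply mul_right_cancel₀ hF3Ω
    rw [← map_mul π, ← hval, ← map_mul]
    have : v * aeval ![1, s, t, ζ] (pderiv 3 F) = - aeval ![1, s, t, ζ] (pderiv 2 F) := by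
      linear_combination hv
    rw [this, map_neg, hval, ← map_neg, ← sub_eq_zero, ← map_sub, hπ]
    filter_upwards [hg3] with P a
    simp [vR, a]
  let tR : MvPolynomial (Fin 2) (Ix F → k) :=
    tp F (fun P => P.1 1) (fun P => P.1 2) (fun P => P.1 3) uR vR
  have htP : ∀ P, map (Pi.evalRingHom (fun _ : Ix F => k) P) tR =
      tp F (P.1 1) (P.1 2) (P.1 3) (uR P) (vR P) := fun P =>
    map_tp (Pi.evalRingHom (fun _ : Ix F => k) P) (fun a => rfl) F _ _ _ _ _
  have htΩ : map π.toRingHom tR = map ι.toRingHom (tp F s t ζ u v) := by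
    have e1 := map_tp π.toRingHom (fun a => π.commutes a) F (fun P => P.1 1) (fun P => P.1 2)
      (fun P => P.1 3) uR vR
    have e2 := map_tp ι.toRingHom (fun a => ι.commutes a) F s t ζ u v
    rw [e2]
    refine e1.trans ?_
    show tp F (π _) (π _) (π _) (π _) (π _) = tp F (ι _) (ι _) (ι _) (ι _) (ι _)
    rw [hιs, hιt, hζ, hιu, hιv]
  by_cases hB1 : ∀ᶠ P in (𝒰 : Filter (Ix F)), Bad1 F (P.1 1) (P.1 2) (P.1 3) (uR P) (vR P)
  · apply hb1
    intro i j
    apply hιi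
    have e1 : π (constantCoeff (pderiv i (pderiv j tR))) = 0 := by
      rw [hπ]
      filter_upwards [hB1] with P hP
      have := hP i j
      rw [← htP, pderiv_map, pderiv_map, constantCoeff_map] at this
      exact this
    have e2 : constantCoeff (pderiv i (pderiv j (map π.toRingHom tR))) = 0 := by
      rw [pderiv_map, pderiv_map, constantCoeff_map]; exact e1
    rw [htΩ, pderiv_map, pderiv_map, constantCoeff_map] at e2
    rw [map_zero]; exact e2
  · rw [← Ultrafilter.eventually_not] at hB1
    have hB2 : ∀ᶠ P in (𝒰 : Filter (Ix F)), ∃ cg : MvPolynomial (Fin 2) k × MvPolynomial (Fin 2) k,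
        cg.1 * cg.2 = tp F (P.1 1) (P.1 2) (P.1 3) (uR P) (vR P) ∧ cg.1.totalDegree ≤ 3 ∧
        constantCoeff cg.1 = 0 ∧ (∀ j, constantCoeff (pderiv j cg.1) = 0) ∧
        cg.2.totalDegree ≤ d := by
      filter_upwards [hB1, hbad'] with P h1 h2
      rcases h2 with h2 | ⟨c, g, h2, h4, h5, h6⟩
      · exact absurd h2 h1
      · refine ⟨(c, g), h2, h4, h5, h6, ?_⟩
        have ht0 : tp F (P.1 1) (P.1 2) (P.1 3) (uR P) (vR P) ≠ 0 := by
          intro h0; apply h1; intro i j; rw [h0]; simp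
        have := totalDegree_le_of_dvd_of_isDomain (Dvd.intro_left c h2) ht0
        refine this.trans ((tp_totalDegree _ _ _ _ _ _).trans hhom.totalDegree_le)
    let cg : Ix F → MvPolynomial (Fin 2) k × MvPolynomial (Fin 2) k := fun P =>
      if h : _ then Classical.choose (p := fun cg : MvPolynomial (Fin 2) k × MvPolynomial (Fin 2) k =>
        cg.1 * cg.2 = tp F (P.1 1) (P.1 2) (P.1 3) (uR P) (vR P) ∧ cg.1.totalDegree ≤ 3 ∧
        constantCoeff cg.1 = 0 ∧ (∀ j, constantCoeff (pderiv j cg.1) = 0) ∧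
        cg.2.totalDegree ≤ d) h else 0
    have hcg : ∀ᶠ P in (𝒰 : Filter (Ix F)), 
        (cg P).1 * (cg P).2 = tp F (P.1 1) (P.1 2) (P.1 3) (uR P) (vR P) ∧ (cg P).1.totalDegree ≤ 3 ∧
        constantCoeff (cg P).1 = 0 ∧ (∀ j, constantCoeff (pderiv j (cg P).1) = 0) ∧
        (cg P).2.totalDegree ≤ d := by
      filter_upwards [hB2] with P hP
      have : cg P = Classical.choose hP := dif_pos hP
      rw [this]
      exact Classical.choose_spec hP
    let cR := lftp 3 (fun P => (cg P).1)
    let gR := lftp d (fun P => (cg P).2)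
    letI : Algebra K Ω := ι.toRingHom.toAlgebra
    obtain ⟨c, g, q1, q2, q3, q4⟩ := descend (K := K) (Ω := Ω) (tp F s t ζ u v)
      (map π.toRingHom cR) (map π.toRingHom gR) (by
        rw [← map_mul]
        refine (map_eq_of_ev (𝒰 := 𝒰) π.toRingHom hπ (cR * gR) tR ?_).trans htΩ
        filter_upwards [hcg] with P hP
        rw [map_mul, htP, map_lftp _ P hP.2.1, map_lftp _ P hP.2.2.2.2, hP.1])
      ((Finset.sup_mono (support_map_subset _ _)).trans (totalDegree_lftp _ _))
      (by
        rw [constantCoeff_map]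
        show π _ = 0
        rw [hπ]
        filter_upwards [hcg] with P hP
        have := hP.2.2.1
        rw [← map_lftp (N := 3) (fun P => (cg P).1) P hP.2.1, constantCoeff_map] at this
        exact this)
      (by
        intro j
        rw [pderiv_map, constantCoeff_map]
        show π _ = 0
        rw [hπ]
        filter_upwards [hcg] with P hP
        have := hP.2.2.2.1 j
        rw [← map_lftp (N := 3) (fun P => (cg P).1) P hP.2.1, pderiv_map, constantCoeff_map] at this
        exact this)
    exact hb2 ⟨c, g, q1, q2, q3, q4⟩
end S18

namespace S18

section bridge
variable {k : Type*} [Field k]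

lemma cc_aeval {σ τ : Type*} (Y : σ → MvPolynomial τ k) (G : MvPolynomial σ k) :
    constantCoeff (aeval Y G) = eval (fun i => constantCoeff (Y i)) G := by
  have := rh_aeval (k := k) (constantCoeff : MvPolynomial τ k →+* k) (fun a => by simp [algebraMap_eq]) Y G
  rw [this, aeval_eq_eval]

lemma pderiv_shift {σ : Type*} [Fintype σ] (p : σ → k) (j : σ) (G : MvPolynomial σ k) :
    pderiv j (bind₁ (fun i => C (p i) + X i) G) = bind₁ (fun i => C (p i) + X i) (pderiv j G) := by
  classical
  show pderiv j (aeval _ G) = aeval _ _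
  rw [chain_rule]
  simp only [map_add, pderiv_C, pderiv_X, zero_add, Pi.single_apply, mul_ite, mul_one, mul_zero]
  simp

lemma cc_shift {σ : Type*} (p : σ → k) (G : MvPolynomial σ k) :
    constantCoeff (bind₁ (fun i => C (p i) + X i) G) = eval p G := by
  show constantCoeff (aeval _ G) = _
  rw [cc_aeval]; simp

lemma coeff_low {σ : Type*} {T : MvPolynomial σ k} (h : ∀ j ≤ 2, homogeneousComponent j T = 0)
    (m : σ →₀ ℕ) (hm : m.degree ≤ 2) : coeff m T = 0 := by
  have := congrArg (coeff m) (h _ hm)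
  rwa [coeff_homogeneousComponent, if_pos rfl, coeff_zero] at this

/-- `ψ`-data -/
lemma restr_aeval (F : MvPolynomial (Fin 4) k) (ψ : (Fin 3 → k) →ₗ[k] (Fin 4 → k))
    (p a b : Fin 3 → k) :
    aeval (fun j => C (p j) + C (a j) * X 0 + C (b j) * X 1 : Fin 3 → MvPolynomial (Fin 2) k)
      (restrictPoly F ψ) =
    aeval (fun i => C (ψ p i) + C (ψ a i) * X 0 + C (ψ b i) * X 1 : Fin 4 → MvPolynomial (Fin 2) k) F := by
  have hψ : ∀ (a : Fin 3 → k) i, ψ a i = ∑ j, ψ (Pi.single j 1) i * a j := by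
    intro a i
    have : a = ∑ j, a j • (Pi.single j 1 : Fin 3 → k) := by
      funext l; simp [Finset.sum_apply, Pi.single_apply]
    conv_lhs => rw [this]
    simp [map_sum, Finset.sum_apply, mul_comm]
  rw [restrictPoly, comp_aeval_apply]
  congr 2
  funext i
  rw [hψ p, hψ a, hψ b]
  simp only [map_sum, map_mul, aeval_X, algHom_C, algebraMap_eq, Finset.sum_mul,
    ← Finset.sum_add_distrib]
  refine Finset.sum_congr rfl fun j _ => ?_
  ring

lemma restr_grad (F : MvPolynomial (Fin 4) k) (ψ : (Fin 3 → k) →ₗ[k] (Fin 4 → k))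
    (p : Fin 3 → k) (h : ∀ j, eval p (pderiv j (restrictPoly F ψ)) = 0) (a : Fin 3 → k) :
    ∑ i, eval (ψ p) (pderiv i F) * ψ a i = 0 := by
  have h1 := restr_aeval F ψ p a 0
  have h2 := congrArg (fun q => constantCoeff (pderiv 0 q)) h1
  simp only [chain_rule, map_sum, map_mul, cc_aeval, map_add, pderiv_C, pderiv_X] at h2
  simp [pderiv_mul, pderiv_X] at h2
  rw [← h2]
  simp [h]

/-- case of order of vanishing at least three -/
lemma bridge1 (F : MvPolynomial (Fin 4) k) (ψ : (Fin 3 → k) →ₗ[k] (Fin 4 → k))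
    (p a b : Fin 3 → k)
    (h : ∀ i j, eval p (pderiv i (pderiv j (restrictPoly F ψ))) = 0) (i j : Fin 2) :
    constantCoeff (pderiv i (pderiv j
      (aeval (fun i => C (ψ p i) + C (ψ a i) * X 0 + C (ψ b i) * X 1 : Fin 4 → MvPolynomial (Fin 2) k) F))) = 0 := by
  rw [← restr_aeval]
  have hY : ∀ (j : Fin 2) (l : Fin 3), pderiv j (C (p l) + C (a l) * X 0 + C (b l) * X 1 : MvPolynomial (Fin 2) k)
      = C (![a l, b l] j) := by
    intro j l
    fin_cases j <;> simp [pderiv_mul, pderiv_X]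
  simp only [chain_rule, map_sum, Derivation.leibniz, hY, map_add, pderiv_C, smul_zero, zero_add,
    smul_eq_mul, map_mul, cc_aeval]
  simp [h]

lemma bridge2 (F : MvPolynomial (Fin 4) k) (ψ : (Fin 3 → k) →ₗ[k] (Fin 4 → k))
    (p a b : Fin 3 → k) (c : MvPolynomial (Fin 3) k) (hc : c.IsHomogeneous 3)
    (hdvd : c ∣ restrictPoly F ψ) (h0 : eval p c = 0) (h1 : ∀ i, eval p (pderiv i c) = 0) :
    ∃ c g : MvPolynomial (Fin 2) k, c * g = (aeval (fun i => C (ψ p i) + C (ψ a i) * X 0 + C (ψ b i) * X 1 : Fin 4 → MvPolynomial (Fin 2) k) F)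
      ∧ c.totalDegree ≤ 3 ∧ constantCoeff c = 0 ∧ ∀ j, constantCoeff (pderiv j c) = 0 := by
  obtain ⟨g, hg⟩ := hdvd
  rw [← restr_aeval, hg, map_mul]
  refine ⟨_, _, rfl, ?_, ?_, ?_⟩
  · refine (totalDegree_aeval_le _ (fun i => ?_) _).trans hc.totalDegree_le
    have hCX : ∀ (a : k) (i : Fin 2), (C a * X i : MvPolynomial (Fin 2) k).totalDegree ≤ 1 := fun a i =>
      (totalDegree_mul _ _).trans (by rw [totalDegree_C, totalDegree_X])
    exact (totalDegree_add _ _).trans (max_le ((totalDegree_add _ _).trans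
      (max_le (by simp) (hCX _ 0))) (hCX _ 1))
  · rw [cc_aeval]; simpa using h0
  · intro j
    simp only [chain_rule, map_sum, map_mul, cc_aeval]
    simp [h1]

lemma ker_mem (Pl : Submodule k (Fin 4 → k)) (hPl : Module.finrank k Pl = 3) (γ : Fin 4 → k)
    (hγ : γ ≠ 0) (h : ∀ x ∈ Pl, ∑ i, γ i * x i = 0) (x : Fin 4 → k) (hx : ∑ i, γ i * x i = 0) :
    x ∈ Pl := by
  let f : (Fin 4 → k) →ₗ[k] k := ∑ i, γ i • LinearMap.proj i
  have hf : ∀ x, f x = ∑ i, γ i * x i := fun x => by simp [f]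
  have hle : Pl ≤ LinearMap.ker f := fun x hx => by rw [LinearMap.mem_ker, hf]; exact h x hx
  have hne : LinearMap.ker f ≠ ⊤ := by
    intro ht
    rw [LinearMap.ker_eq_top] at ht
    apply hγ
    funext i
    have := hf (Pi.single i 1)
    rw [ht] at this
    simpa [Pi.single_apply] using this.symm
  have hlt := Submodule.finrank_lt hne
  rw [Module.finrank_fin_fun] at hlt
  have := Submodule.eq_of_le_of_finrank_le hle (by omega)
  rw [this, LinearMap.mem_ker, hf, hx]

lemma span_vanish [Infinite k] {d : ℕ} (F : MvPolynomial (Fin 4) k) (hF : F.IsHomogeneous d) (P w : Fin 4 → k)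
    (h : ∀ τ : k, eval (fun i => P i + τ * w i) F = 0) (a b : k) :
    eval (a • P + b • w) F = 0 := by
  have h1 : ∀ a b : k, a ≠ 0 → eval (fun i => a * P i + b * w i) F = 0 := by
    intro a b ha
    have := eval_smul_hom hF a (fun i => P i + (b / a) * w i)
    rw [h, mul_zero] at this
    rw [← this]
    congr 2
    funext i
    field_simp
  let f : Polynomial k := aeval (fun i => Polynomial.X * Polynomial.C (P i) + Polynomial.C (b * w i)) F
  have hf : ∀ τ, f.eval τ = eval (fun i => τ * P i + b * w i) F := by
    intro τ
    have := rh_aeval (k := k) (Polynomial.evalRingHom τ) (fun a => by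
        rw [Polynomial.algebraMap_apply]; simp)
        (fun i => Polynomial.X * Polynomial.C (P i) + Polynomial.C (b * w i)) F
    rw [Polynomial.coe_evalRingHom] at this
    show Polynomial.eval τ (aeval _ F) = _
    rw [this, aeval_eq_eval]
    show eval _ F = _
    congr 2
    funext i
    simp
    try exact mul_comm _ _
  have hf0 : Polynomial.X * f = 0 := by
    apply Polynomial.funext
    intro τ
    rw [Polynomial.eval_mul, Polynomial.eval_X, hf, Polynomial.eval_zero]
    by_cases h0 : τ = 0
    · rw [h0, zero_mul]
    · rw [h1 _ _ h0, mul_zero]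
  have hf1 : f = 0 := by simpa using hf0
  have := hf a
  rw [hf1, Polynomial.eval_zero] at this
  exact this.symm

lemma finrank_pair {P w : Fin 4 → k} (hl : LinearIndependent k ![P, w]) :
    Module.finrank k (Submodule.span k {P, w}) = 2 := by
  have := finrank_span_eq_card hl
  have e : Set.range ![P, w] = {P, w} := by
    rw [Matrix.range_cons, Matrix.range_cons, Matrix.range_empty, Set.union_empty]; rfl
  rw [e] at this
  simpa using this

lemma exists_form (L : Submodule k (Fin 4 → k)) (hL : Module.finrank k L = 2) :
    ∃ l : Fin 4 → k, l ≠ 0 ∧ ∀ x ∈ L, l ⬝ᵥ x = 0 := by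
  have hlt : L < ⊤ := by
    rw [lt_top_iff_ne_top]; rintro rfl
    rw [finrank_top, Module.finrank_fin_fun] at hL; omega
  obtain ⟨f, hf, hle⟩ := Submodule.exists_le_ker_of_lt_top L hlt
  have hf' : ∀ x, f x = (fun i => f (Pi.single i 1)) ⬝ᵥ x := by
    intro a
    have : a = ∑ j, a j • (Pi.single j 1 : Fin 4 → k) := by
      funext l; simp [Finset.sum_apply, Pi.single_apply]
    conv_lhs => rw [this]
    simp [map_sum, dotProduct, mul_comm]
  refine ⟨fun i => f (Pi.single i 1), ?_, ?_⟩
  · intro h0; apply hf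
    refine LinearMap.ext fun x => ?_
    rw [hf', h0]; simp
  · intro x hx
    rw [← hf']; exact hle hx

lemma exists_line (Pl : Submodule k (Fin 4 → k)) (hPl : Module.finrank k Pl = 3) (P : Fin 4 → k)
    (hP : P ∈ Pl) (hP0 : P ≠ 0) :
    ∃ L : Submodule k (Fin 4 → k), Module.finrank k L = 2 ∧ P ∈ L ∧ L ≤ Pl := by
  have : ∃ Q ∈ Pl, Q ∉ Submodule.span k {P} := by
    by_contra! hcon
    have h1 : Pl ≤ Submodule.span k {P} := hcon
    have h2 := Submodule.finrank_mono h1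
    rw [finrank_span_singleton hP0] at h2
    omega
  obtain ⟨Q, hQ, hQP⟩ := this
  refine ⟨Submodule.span k {P, Q}, finrank_pair ?_, Submodule.subset_span (by simp), ?_⟩
  · rw [LinearIndependent.pair_iff' hP0]
    intro a ha
    exact hQP (Submodule.mem_span_singleton.2 ⟨a, ha⟩)
  · rw [Submodule.span_le]
    rintro x (rfl | rfl) <;> assumption
end bridge

theorem final (k : Type*) [Field k] [IsAlgClosed k] [CharZero k] (d : ℕ) (hd : 4 ≤ d)
    (F : MvPolynomial (Fin 4) k) (hhom : F.IsHomogeneous d) (hirr : Irreducible F)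
    (hlines : {L : Submodule k (Fin 4 → k) |
      Module.finrank k L = 2 ∧ ∀ x ∈ L, eval x F = 0}.Finite) :
    ∃ P A B : Fin 4 → k, P ≠ 0 ∧ eval P F = 0 ∧
      (∃ i, eval P (pderiv i F) ≠ 0) ∧
      (¬ ∃ L : Submodule k (Fin 4 → k), Module.finrank k L = 2 ∧ P ∈ L ∧
        ∀ x ∈ L, eval x F = 0) ∧
      ∑ i, eval P (pderiv i F) * A i = 0 ∧ ∑ i, eval P (pderiv i F) * B i = 0 ∧
      (¬ ∀ i j, constantCoeff (pderiv i (pderiv j (aeval (fun i => C (P i) + C (A i) * X 0 + C (B i) * X 1 : Fin 4 → MvPolynomial (Fin 2) k) F))) = 0) ∧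
      ¬ ∃ c g : MvPolynomial (Fin 2) k, c * g = (aeval (fun i => C (P i) + C (A i) * X 0 + C (B i) * X 1 : Fin 4 → MvPolynomial (Fin 2) k) F)
      ∧ c.totalDegree ≤ 3 ∧ constantCoeff c = 0 ∧ ∀ j, constantCoeff (pderiv j c) = 0 := by
  classical
  haveI : Infinite k := IsAlgClosed.instInfinite
  obtain ⟨i0, hi0⟩ : ∃ i, pderiv i F ≠ 0 := by
    by_contra! hcon
    have := hhom.sum_X_mul_pderiv
    simp [hcon] at this
    rcases this with h | h
    · omega
    · exact hirr.ne_zero h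
  let e : Equiv.Perm (Fin 4) := Equiv.swap i0 3
  have he0 : e i0 = 3 := Equiv.swap_apply_left _ _
  have hee : ∀ i, e (e i) = i := fun i => Equiv.swap_apply_self _ _ _
  let F' := rename e F
  have hev : ∀ (P : Fin 4 → k) (G : MvPolynomial (Fin 4) k), eval P (rename e G) = eval (P ∘ e) G :=
    fun P G => eval_rename _ _ _
  have hpd : ∀ i, pderiv (e i) F' = rename e (pderiv i F) := fun i => pderiv_rename e.injective _ _
  have hhom' : F'.IsHomogeneous d := hhom.rename_isHomogeneous
  have hirr' : Irreducible F' := by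
    have := (MulEquiv.irreducible_iff (renameEquiv k e)).2 hirr
    exact this
  have h3 : pderiv 3 F' ≠ 0 := by
    rw [← he0, hpd]
    intro h
    exact hi0 (rename_injective e e.injective (by rw [h, map_zero]))
  choose! lf hlf0 hlf using fun (L : Submodule k (Fin 4 → k)) (hL : Module.finrank k L = 2) => exists_form L hL
  have hdot : ∀ (l P : Fin 4 → k), (l ∘ e) ⬝ᵥ P = l ⬝ᵥ (P ∘ e) := by
    intro l P
    simp only [dotProduct, Function.comp]
    rw [← Equiv.sum_comp e]
    simp [hee]
  have hcomp0 : ∀ w : Fin 4 → k, w ∘ e = 0 → w = 0 := by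
    intro w hw
    funext i
    have := congrFun hw (e i)
    simpa [hee] using this
  obtain ⟨P', hP0, hPF, hP3, hPl, hbad⟩ := mainAux hd F' hhom' hirr' h3
    (hlines.toFinset.image fun L => lf L ∘ e)
    (by
      intro l hl
      simp only [Finset.mem_image, Set.Finite.mem_toFinset, Set.mem_setOf_eq] at hl
      obtain ⟨L, hL, rfl⟩ := hl
      exact fun h => hlf0 L hL.1 (hcomp0 _ h))
    (by
      intro P w hP hw0 hw h
      have hli : LinearIndependent k ![P ∘ e, w ∘ e] := by
        rw [LinearIndependent.pair_iff]
        intro a b hab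
        have h1 : (a • P + b • w) = 0 := hcomp0 _ hab
        have h2 := congrFun h1 0
        simp [hP, hw0] at h2
        refine ⟨h2, ?_⟩
        rw [h2, zero_smul, zero_add] at h1
        exact (smul_eq_zero.1 h1).resolve_right hw
      have hL : Submodule.span k {P ∘ e, w ∘ e} ∈ {L : Submodule k (Fin 4 → k) |
          Module.finrank k L = 2 ∧ ∀ x ∈ L, eval x F = 0} := by
        refine ⟨finrank_pair hli, fun x hx => ?_⟩
        obtain ⟨a, b, rfl⟩ := Submodule.mem_span_pair.1 hx
        apply span_vanish F hhom
        intro τ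
        have := h τ
        rw [hev] at this
        exact this
      refine ⟨_, Finset.mem_image.2 ⟨_, hlines.mem_toFinset.2 hL, rfl⟩, ?_⟩
      rw [hdot]
      exact hlf _ hL.1 _ (Submodule.subset_span (by simp)))
  let u := - eval P' (pderiv 1 F') / eval P' (pderiv 3 F')
  let v := - eval P' (pderiv 2 F') / eval P' (pderiv 3 F')
  have hu : eval P' (pderiv 1 F') + u * eval P' (pderiv 3 F') = 0 := by
    simp only [u]; field_simp; ring
  have hv : eval P' (pderiv 2 F') + v * eval P' (pderiv 3 F') = 0 := by
    simp only [v]; field_simp; ring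
  obtain ⟨hb1, hb2⟩ := hbad u v hu hv
  have htp : tp F' (P' 1) (P' 2) (P' 3) u v = (aeval (fun i => C ((P' ∘ e) i) + C (((![0,1,0,u] : Fin 4 → k) ∘ e) i) * X 0 + C (((![0,0,1,v] : Fin 4 → k) ∘ e) i) * X 1 : Fin 4 → MvPolynomial (Fin 2) k) F) := by
    show aeval _ (rename e F) = _
    rw [aeval_rename]
    have : ∀ i, (![1, C (P' 1) + X 0, C (P' 2) + X 1, C (P' 3) + C u * X 0 + C v * X 1] : Fin 4 → MvPolynomial (Fin 2) k) i
       = C (P' i) + C ((![0,1,0,u] : Fin 4 → k) i) * X 0 + C ((![0,0,1,v] : Fin 4 → k) i) * X 1 := by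
      intro i
      fin_cases i <;> simp [hP0]
    congr 2
    funext i
    exact this (e i)
  have hsum : ∀ A : Fin 4 → k, ∑ i, eval (P' ∘ e) (pderiv i F) * (A ∘ e) i
      = ∑ i, eval P' (pderiv i F') * A i := by
    intro A
    rw [← Equiv.sum_comp e (fun i => eval P' (pderiv i F') * A i)]
    refine Finset.sum_congr rfl fun i _ => ?_
    rw [hpd, hev]; rfl
  refine ⟨P' ∘ e, (![0,1,0,u] : Fin 4 → k) ∘ e, (![0,0,1,v] : Fin 4 → k) ∘ e, ?_, ?_, ⟨i0, ?_⟩, ?_, ?_, ?_, ?_, ?_⟩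
  · intro h
    have := hcomp0 _ h
    rw [this] at hP0; simp at hP0
  · rw [← hev]; exact hPF
  · rw [← hev, ← hpd, he0]; exact hP3
  · rintro ⟨L, hL, hPL, hLF⟩
    apply hPl (lf L ∘ e) (Finset.mem_image.2 ⟨L, hlines.mem_toFinset.2 ⟨hL, hLF⟩, rfl⟩)
    rw [hdot]
    exact hlf L hL _ hPL
  · rw [hsum, Fin.sum_univ_four]
    simp
    linear_combination hu
  · rw [hsum, Fin.sum_univ_four]
    simp
    linear_combination hv
  · rw [← htp]; exact hb1
  · rw [← htp]; exact hb2
end S18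

/-- Lemma 5.5 of Salberger (case `d ≥ 4`, conditions (%₁)–(%₄) of Definition 5.2): an
integral surface `X = {F = 0} ⊂ P^3` of degree `d ≥ 4` over an algebraically closed
field of characteristic `0` containing only finitely many lines has a closed point `P`
such that: (1) `P` is non-singular; (2) `P` lies on no plane contained in `X` and has
multiplicity at most two on every plane section of `X`; (3) `P` lies on no line on `X`;
(4) `P` is a non-singular point of every plane cubic contained in `X` through `P`. -/
theorem stmt_18 (k : Type*) [Field k] [IsAlgClosed k] [CharZero k] (d : ℕ) (hd : 4 ≤ d)
    (F : MvPolynomial (Fin 4) k) (hhom : F.IsHomogeneous d) (hirr : Irreducible F)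
    (hlines : {L : Submodule k (Fin 4 → k) |
      Module.finrank k L = 2 ∧ ∀ x ∈ L, eval x F = 0}.Finite) :
    ∃ P : Fin 4 → k, P ≠ 0 ∧ eval P F = 0 ∧
      (∃ i, eval P (pderiv i F) ≠ 0) ∧
      (¬ ∃ Pl : Submodule k (Fin 4 → k), Module.finrank k Pl = 3 ∧ P ∈ Pl ∧
        ∀ x ∈ Pl, eval x F = 0) ∧
      (∀ Pl : Submodule k (Fin 4 → k), Module.finrank k Pl = 3 → ∀ hP : P ∈ Pl,
        ∀ φ : (Fin 3 → k) ≃ₗ[k] Pl,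
          ∃ j ≤ 2, homogeneousComponent j
            (bind₁ (fun i => C ((φ.symm ⟨P, hP⟩ : Fin 3 → k) i) + X i)
              (restrictPoly F (Pl.subtype.comp φ.toLinearMap))) ≠ 0) ∧
      (¬ ∃ L : Submodule k (Fin 4 → k), Module.finrank k L = 2 ∧ P ∈ L ∧
        ∀ x ∈ L, eval x F = 0) ∧
      (∀ Pl : Submodule k (Fin 4 → k), Module.finrank k Pl = 3 → ∀ hP : P ∈ Pl,
        ∀ φ : (Fin 3 → k) ≃ₗ[k] Pl, ∀ c : MvPolynomial (Fin 3) k,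
          c.IsHomogeneous 3 → c ∣ restrictPoly F (Pl.subtype.comp φ.toLinearMap) →
          eval (φ.symm ⟨P, hP⟩ : Fin 3 → k) c = 0 →
          ∃ i, eval (φ.symm ⟨P, hP⟩ : Fin 3 → k) (pderiv i c) ≠ 0) := by
  obtain ⟨P, A, B, hP0, hPF, ⟨i0, hi0⟩, hline, hA, hB, hb1, hb2⟩ :=
    S18.final k d hd F hhom hirr hlines
  have hγ : (fun i => eval P (pderiv i F)) ≠ 0 := fun h => hi0 (congrFun h i0)
  have key : ∀ Pl : Submodule k (Fin 4 → k), Module.finrank k Pl = 3 → ∀ hP : P ∈ Pl,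
        ∀ φ : (Fin 3 → k) ≃ₗ[k] Pl,
        (∀ j, eval (φ.symm ⟨P, hP⟩ : Fin 3 → k)
          (pderiv j (restrictPoly F (Pl.subtype.comp φ.toLinearMap))) = 0) →
        ∃ a b : Fin 3 → k, (Pl.subtype.comp φ.toLinearMap) (φ.symm ⟨P, hP⟩) = P ∧
          (Pl.subtype.comp φ.toLinearMap) a = A ∧ (Pl.subtype.comp φ.toLinearMap) b = B := by
    intro Pl hPl hP φ hgr
    have hp : (Pl.subtype.comp φ.toLinearMap) (φ.symm ⟨P, hP⟩) = P := by simp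
    have hker : ∀ x ∈ Pl, ∑ i, eval P (pderiv i F) * x i = 0 := by
      intro x hx
      have := S18.restr_grad F (Pl.subtype.comp φ.toLinearMap) _ hgr (φ.symm ⟨x, hx⟩)
      rw [hp] at this
      simpa using this
    have hAm := S18.ker_mem Pl hPl _ hγ hker A hA
    have hBm := S18.ker_mem Pl hPl _ hγ hker B hB
    exact ⟨φ.symm ⟨A, hAm⟩, φ.symm ⟨B, hBm⟩, hp, by simp, by simp⟩
  refine ⟨P, hP0, hPF, ⟨i0, hi0⟩, ?_, ?_, hline, ?_⟩
  · rintro ⟨Pl, hPl, hP, hv⟩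
    obtain ⟨L, hL, hPL, hLP⟩ := S18.exists_line Pl hPl P hP hP0
    exact hline ⟨L, hL, hPL, fun x hx => hv x (hLP hx)⟩
  · intro Pl hPl hP φ
    by_contra! hcon
    have hlow := S18.coeff_low hcon
    have hg1 : ∀ j, eval (φ.symm ⟨P, hP⟩ : Fin 3 → k)
          (pderiv j (restrictPoly F (Pl.subtype.comp φ.toLinearMap))) = 0 := by
      intro j
      rw [← S18.cc_shift, ← S18.pderiv_shift, constantCoeff_eq, coeff_pderiv, hlow, zero_mul]
      simp
    have hg2 : ∀ i j, eval (φ.symm ⟨P, hP⟩ : Fin 3 → k)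
          (pderiv i (pderiv j (restrictPoly F (Pl.subtype.comp φ.toLinearMap)))) = 0 := by
      intro i j
      rw [← S18.cc_shift, ← S18.pderiv_shift, ← S18.pderiv_shift, constantCoeff_eq, coeff_pderiv,
        coeff_pderiv, hlow, zero_mul, zero_mul]
      simp
    obtain ⟨a, b, hp, ha, hb⟩ := key Pl hPl hP φ hg1
    apply hb1
    intro i j
    have := S18.bridge1 F (Pl.subtype.comp φ.toLinearMap) (φ.symm ⟨P, hP⟩) a b hg2 i j
    rwa [hp, ha, hb] at this
  · intro Pl hPl hP φ c hc hdvd hc0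
    by_contra! hcon
    have hg1 : ∀ j, eval (φ.symm ⟨P, hP⟩ : Fin 3 → k)
          (pderiv j (restrictPoly F (Pl.subtype.comp φ.toLinearMap))) = 0 := by
      intro j
      obtain ⟨g, hg⟩ := hdvd
      rw [hg, pderiv_mul, map_add, map_mul, map_mul, hcon, hc0]
      ring
    obtain ⟨a, b, hp, ha, hb⟩ := key Pl hPl hP φ hg1
    have := S18.bridge2 F (Pl.subtype.comp φ.toLinearMap) (φ.symm ⟨P, hP⟩) a b c hc hdvd hc0 hcon
    rw [hp, ha, hb] at this
    exact hb2 this
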